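/- Suppose ℓ_R(J/I) < ∞. Then the limit lim_{n→∞} d!·ℓ_R(Jⁿ/Iⁿ)/n^d exists and equals ∫₀^∞ (f_{{Jⁿ}}(x) − f_{{Iⁿ}}(x)) dx (the integrand vanishes for all x ≥ c, where c is any integer as in the conclusion of the statement that (Jⁿ)_m = (Iⁿ)_m for n > 0 and m ≥ cn). -/

import Mathlib

/-!
Write `h_𝔞(n, m) = ℓ_k((𝔞ⁿ)_m)` for `𝔞 = I, J`. The length `ℓ_k(Jⁿ/Iⁿ)` is the sum over `m` of
`h_J(n, m) - h_I(n, m)`. Finite length of `J/I` gives a constant `c` for which these differences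
vanish as soon as `m ≥ cn` (`exists_idealComp_pow_le`, `quotDim_eq_sum`). After multiplication by
`d!/n^d` the sum is the integral over `x > 0` of the difference of the step functions
`d! h_J(n, ⌊xn⌋)/n^(d-1)` and `d! h_I(n, ⌊xn⌋)/n^(d-1)`. These are uniformly bounded on `[0, c]`,
because the Hilbert function of `R` is `O(m^(d-1))` (`exists_finrank_graded_le`, from a Noether
normalization). By dominated convergence it suffices that each step function converges almost
everywhere, its limit then being the density function.

For the almost everywhere convergence, consider first a ray of rational slope `p/q`. The component
`(𝔞ⁿ)_m` is spanned by the products of bidegree `(n, m)` of generators of `R` of degree one and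
homogeneous generators of `𝔞` (`idealComp_pow_eq_monoSpan`). The exponent vectors whose bidegree
lies on the ray form a finitely generated monoid (Gordan's lemma), so the components on the ray
are the graded pieces of an algebra spanned by monomials in finitely many generators. The standard
monomials, those which are not combinations of smaller monomials of the same weight, form a basis,
and their exponents form a lower set; counting them shows that the dimension is a polynomial in
`n` along a subprogression of the ray (`quasiPoly_wcount`, `exists_poly_finrank_span`,
`exists_poly_compLen`). With the growth bound this gives a limit along every rational ray
(`exists_ray_limit`).

The functions `h_𝔞` satisfy `h(n, m) ≤ h(n, m + 1)` and `h(n, m) ≤ h(n + 1, m + D)`, since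
multiplication by a nonzero homogeneous element of a domain is injective. Thus the values at a
point `x` are squeezed between the limits along rational rays of slope slightly smaller and larger
than `x` (`exists_separating`). The limit function is nondecreasing, so it is continuous outside a
countable set, and there the squeeze forces convergence (`tendsto_density`).
-/

open Filter Polynomial MeasureTheory

noncomputable section DensityDefs

variable (k : Type*) [Field k] {R : Type*} [CommRing R] [Algebra k R]

/-- The degree-`m` homogeneous component of an ideal `I` of a graded algebra,
as a `k`-subspace of `R`. -/
def idealComp (𝒜 : ℕ → Submodule k R) (I : Ideal R) (m : ℕ) : Submodule k R :=
  (Submodule.restrictScalars k I) ⊓ 𝒜 m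

/-- `ℓ_k((I)_m)`, the `k`-dimension of the degree-`m` component of `I`. -/
def compLen (𝒜 : ℕ → Submodule k R) (I : Ideal R) (m : ℕ) : ℕ :=
  Module.finrank k (idealComp k 𝒜 I m)

/-- The adic density function `f_{{Iⁿ}}(x) = limsup_n d!·ℓ_k((Iⁿ)_{⌊xn⌋})/n^(d-1)`. -/
def adicDensity (𝒜 : ℕ → Submodule k R) (I : Ideal R) (d : ℕ) (x : ℝ) : ℝ :=
  Filter.limsup (fun n : ℕ =>
    (Nat.factorial d : ℝ) * (compLen k 𝒜 (I ^ n) (⌊x * (n : ℝ)⌋₊)) / (n : ℝ) ^ (d - 1))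
    Filter.atTop

/-- `I` can be generated by homogeneous elements of degree at most `D`. -/
def GeneratedInDegLE (𝒜 : ℕ → Submodule k R) (I : Ideal R) (D : ℕ) : Prop :=
  ∃ s : Set R, I = Ideal.span s ∧ ∀ r ∈ s, ∃ i ≤ D, r ∈ 𝒜 i

/-- The standard graded hypotheses: `R₀ = k·1`, `R` is generated in degree one, and
the degree-one piece is finitely generated (so `R` is a finitely generated `k`-algebra). -/
def IsStandardGraded (𝒜 : ℕ → Submodule k R) : Prop :=
  𝒜 0 = Submodule.span k {(1 : R)} ∧ (∀ n : ℕ, 𝒜 (n + 1) = 𝒜 1 * 𝒜 n) ∧ (𝒜 1).FG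

/-- `r` satisfies an equation of integral dependence over the ideal `I`:
`r^n + a₁ r^(n-1) + ⋯ + aₙ = 0` with `aᵢ ∈ Iⁱ`. -/
def IsIntOverIdeal {R : Type*} [CommRing R] (I : Ideal R) (r : R) : Prop :=
  ∃ n : ℕ, 0 < n ∧ ∃ a : ℕ → R, (∀ i, 1 ≤ i → i ≤ n → a i ∈ I ^ i) ∧
    r ^ n + ∑ i ∈ Finset.Icc 1 n, a i * r ^ (n - i) = 0

/-- The integral closure `Ī` of an ideal `I` (the set of elements integral over `I`
is an ideal, so taking the span does not change the set). -/
def intCl {R : Type*} [CommRing R] (I : Ideal R) : Ideal R :=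
  Ideal.span {r | IsIntOverIdeal I r}

/-- The height of an ideal: the infimum of the heights of the primes containing it. -/
def idealHeight {R : Type*} [CommRing R] (I : Ideal R) : ℕ∞ :=
  ⨅ p ∈ {p : PrimeSpectrum R | I ≤ p.asIdeal}, Order.height p

/-- The saturation `I :_R M^∞ = ⋃_t (I :_R M^t)`. -/
def satIdeal {R : Type*} [CommRing R] (I M : Ideal R) : Ideal R :=
  ⨆ t : ℕ, Submodule.colon (I : Submodule R R) ((M ^ t : Ideal R) : Submodule R R)

/-- The saturation density function `f_{{Ĩⁿ}}(x) = limsup_n d!·ℓ_k((Iⁿ:M^∞)_{⌊xn⌋})/n^(d-1)`. -/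
def satDensity (𝒜 : ℕ → Submodule k R) (I M : Ideal R) (d : ℕ) (x : ℝ) : ℝ :=
  Filter.limsup (fun n : ℕ =>
    (Nat.factorial d : ℝ) * (compLen k 𝒜 (satIdeal (I ^ n) M) (⌊x * (n : ℝ)⌋₊)) /
      (n : ℝ) ^ (d - 1)) Filter.atTop

/-- The `k`-dimension of the quotient `A/B` of two `k`-subspaces.  For ideals `B ⊆ A`
of a standard graded `k`-algebra whose quotient has finite length, this agrees with the
length `ℓ_R(A/B)`, since the residue field at the irrelevant maximal ideal is `k`. -/
def quotDim {R : Type*} [CommRing R] [Algebra k R] (A B : Submodule k R) : ℕ :=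
  Module.finrank k (↥A ⧸ Submodule.comap A.subtype B)

/-- The epsilon multiplicity `ε(I) = limsup_n d!·ℓ((Iⁿ : M^∞)/Iⁿ)/n^d`. -/
def epsMult {R : Type*} [CommRing R] [Algebra k R] (I M : Ideal R) (d : ℕ) : ℝ :=
  Filter.limsup (fun n : ℕ =>
    (Nat.factorial d : ℝ) *
      (quotDim k (Submodule.restrictScalars k (satIdeal (I ^ n) M))
        (Submodule.restrictScalars k (I ^ n))) / (n : ℝ) ^ d) Filter.atTop

/-- The integers `e i` are the RA-multiplicities of `I` (in dimension `d`, with `D` a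
bound for the generating degrees of `I`): for `m ≥ D·n + m₀` and `n ≥ n₀` the length
`ℓ_k((Iⁿ)_m)` agrees with a numerical polynomial of total degree `d-1` whose
top-degree homogeneous part is `Σᵢ (e i)/(i!(d-1-i)!)·mⁱ·n^(d-1-i)`. -/
def HasRAMult (𝒜 : ℕ → Submodule k R) (I : Ideal R) (d D : ℕ) (e : ℕ → ℤ) : Prop :=
  ∃ (a : ℕ → ℕ → ℚ) (m₀ n₀ : ℕ),
    (∀ i j, d - 1 < i + j → a i j = 0) ∧
    (∀ i, i ≤ d - 1 →
      a i (d - 1 - i) = (e i : ℚ) / ((Nat.factorial i : ℚ) * (Nat.factorial (d - 1 - i) : ℚ))) ∧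
    (∀ m n : ℕ, n₀ ≤ n → D * n + m₀ ≤ m →
      (compLen k 𝒜 (I ^ n) m : ℚ) =
        ∑ i ∈ Finset.range d, ∑ j ∈ Finset.range d, a i j * (m : ℚ) ^ i * (n : ℚ) ^ j)

/-- `L` is the Hilbert–Samuel multiplicity of the `(c,1)`-diagonal subalgebra
`R[It]_{Δ(c,1)} = ⊕ₙ (Iⁿ)_{cn}`, i.e. `L = lim_n (d-1)!·ℓ_k((Iⁿ)_{cn})/n^(d-1)`. -/
def HasDiagMult (𝒜 : ℕ → Submodule k R) (I : Ideal R) (d c : ℕ) (L : ℝ) : Prop :=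
  Filter.Tendsto (fun n : ℕ =>
    (Nat.factorial (d - 1) : ℝ) * (compLen k 𝒜 (I ^ n) (c * n)) / (n : ℝ) ^ (d - 1))
    Filter.atTop (nhds L)

/-- The degree-`s` homogeneous component of `S = R[Y]` where `Y` has degree `1`:
polynomials `p` with `p.coeff t ∈ 𝒜 (s - t)` for `t ≤ s` and `p.coeff t = 0` for `t > s`. -/
def polyGrade (𝒜 : ℕ → Submodule k R) (s : ℕ) : Submodule k (Polynomial R) :=
  ⨅ t : ℕ, Submodule.comap ((Polynomial.lcoeff R t).restrictScalars k)
    (if t ≤ s then 𝒜 (s - t) else ⊥)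

/-- `ℓ_k((𝖨ⁿ)_s)` where `𝖨 = IS ⊆ S = R[Y]`. -/
def polyCompLen (𝒜 : ℕ → Submodule k R) (I : Ideal R) (n s : ℕ) : ℕ :=
  Module.finrank k
    ↥((Submodule.restrictScalars k ((Ideal.map (Polynomial.C : R →+* Polynomial R) I) ^ n)) ⊓
      polyGrade k 𝒜 s)

/-- `L` is the Hilbert–Samuel multiplicity of the `(c,1)`-diagonal subalgebra
`S[𝖨t]_{Δ(c,1)} = ⊕ₙ (𝖨ⁿ)_{cn}` of the Rees algebra over `S = R[Y]`,
i.e. `L = lim_n d!·ℓ_k((𝖨ⁿ)_{cn})/n^d`. -/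
def HasPolyDiagMult (𝒜 : ℕ → Submodule k R) (I : Ideal R) (d c : ℕ) (L : ℝ) : Prop :=
  Filter.Tendsto (fun n : ℕ =>
    (Nat.factorial d : ℝ) * (polyCompLen k 𝒜 I n (c * n)) / (n : ℝ) ^ d)
    Filter.atTop (nhds L)

/-- The integers `em i` are the mixed multiplicities `e_i(M|a)` of the pair `(M, a)`
in a ring `T` of dimension `e`: for `u, v ≫ 0`, `ℓ_T(M^u a^v / M^(u+1) a^v)` agrees with
a numerical polynomial of total degree `e-1` whose top-degree homogeneous part is
`Σᵢ (em i)/(i!(e-1-i)!)·u^(e-1-i)·vⁱ`.  (Lengths are recorded as `k`-dimensions, which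
agree with `ℓ_T` since the residue field is `k`.) -/
def HasMixedMult {T : Type*} [CommRing T] [Algebra k T] (M a : Ideal T) (e : ℕ)
    (em : ℕ → ℤ) : Prop :=
  ∃ (c : ℕ → ℕ → ℚ) (u₀ v₀ : ℕ),
    (∀ i j, e - 1 < i + j → c i j = 0) ∧
    (∀ i, i ≤ e - 1 →
      c (e - 1 - i) i = (em i : ℚ) / ((Nat.factorial i : ℚ) * (Nat.factorial (e - 1 - i) : ℚ))) ∧
    (∀ u v : ℕ, u₀ ≤ u → v₀ ≤ v →
      (quotDim k (Submodule.restrictScalars k ((M ^ u * a ^ v : Ideal T) : Submodule T T))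
          (Submodule.restrictScalars k ((M ^ (u + 1) * a ^ v : Ideal T) : Submodule T T)) : ℚ) =
        ∑ i ∈ Finset.range e, ∑ j ∈ Finset.range e, c i j * (u : ℚ) ^ i * (v : ℚ) ^ j)

end DensityDefs

/-! ### Quasi-polynomial counting functions -/

/-- A function `f : ℤ → ℚ` is `E`-quasi-polynomial if on each residue class modulo `E` it
eventually agrees with a polynomial. The residue `r` ranges over all integers, so that the
notion is visibly invariant under shifts. -/
def QuasiPoly (E : ℕ) (f : ℤ → ℚ) : Prop :=
  ∀ r : ℤ, ∃ p : ℚ[X], ∀ᶠ n : ℕ in atTop, f (E * n + r) = p.eval (n : ℚ)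

lemma QuasiPoly.add {E : ℕ} {f g : ℤ → ℚ} (hf : QuasiPoly E f) (hg : QuasiPoly E g) :
    QuasiPoly E (fun n => f n + g n) := by
  intro r
  obtain ⟨p, hp⟩ := hf r
  obtain ⟨q, hq⟩ := hg r
  refine ⟨p + q, ?_⟩
  filter_upwards [hp, hq] with n h1 h2
  simp [h1, h2]

lemma QuasiPoly.shift {E : ℕ} {f : ℤ → ℚ} (hf : QuasiPoly E f) (t : ℤ) :
    QuasiPoly E (fun n => f (n - t)) := by
  intro r
  obtain ⟨p, hp⟩ := hf (r - t)
  refine ⟨p, ?_⟩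
  filter_upwards [hp] with n h1
  rw [← h1]; ring_nf

lemma QuasiPoly.zero {E : ℕ} : QuasiPoly E (fun _ => 0) := fun _ => ⟨0, by simp⟩

lemma QuasiPoly.sum {E : ℕ} {ι : Type*} (s : Finset ι) {f : ι → ℤ → ℚ}
    (hf : ∀ i ∈ s, QuasiPoly E (f i)) : QuasiPoly E (fun n => ∑ i ∈ s, f i n) := by
  classical
  induction s using Finset.induction_on with
  | empty => simpa using QuasiPoly.zero
  | insert a s ha ih =>
    simp only [Finset.sum_insert ha]
    exact (hf a (by simp)).add (ih fun i hi => hf i (by simp [hi]))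

/-- Discrete antiderivatives of polynomials, built from Bernoulli polynomials. -/
lemma exists_discrete_antideriv (p : ℚ[X]) :
    ∃ q : ℚ[X], ∀ x : ℚ, q.eval (x + 1) - q.eval x = p.eval x := by
  induction p using Polynomial.induction_on' with
  | add p q hp hq =>
    obtain ⟨a, ha⟩ := hp
    obtain ⟨b, hb⟩ := hq
    refine ⟨a + b, fun x => ?_⟩
    simp only [eval_add, ← ha, ← hb]; ring
  | monomial n c =>
    refine ⟨C (c / (n + 1)) * Polynomial.bernoulli (n + 1), fun x => ?_⟩
    have h0 : ((n : ℚ) + 1) ≠ 0 := by positivity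
    rw [eval_mul, eval_mul, add_comm x 1, bernoulli_eval_one_add]
    simp only [eval_C, eval_monomial, Nat.add_sub_cancel]
    push_cast
    field_simp
    ring

/-- A sequence whose first difference is eventually polynomial is eventually polynomial. -/
lemma eventually_poly_of_diff {u : ℕ → ℚ} {p : ℚ[X]}
    (h : ∀ᶠ n : ℕ in atTop, u (n + 1) - u n = p.eval (n : ℚ)) :
    ∃ q : ℚ[X], ∀ᶠ n : ℕ in atTop, u n = q.eval (n : ℚ) := by
  obtain ⟨q, hq⟩ := exists_discrete_antideriv p
  obtain ⟨N, hN⟩ := eventually_atTop.1 h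
  refine ⟨q + C (u N - q.eval (N : ℚ)), eventually_atTop.2 ⟨N, fun n hn => ?_⟩⟩
  induction n, hn using Nat.le_induction with
  | base => simp
  | succ m hm ih =>
    have h1 := hN m hm
    have h2 := hq m
    simp only [eval_add, eval_C] at ih ⊢
    push_cast
    linarith

lemma QuasiPoly.of_diff {E l : ℕ} (hlE : l ∣ E) {f g : ℤ → ℚ}
    (hg : QuasiPoly E g) (hfg : ∀ n, f n = g n + f (n - l)) : QuasiPoly E f := by
  obtain ⟨m, rfl⟩ := hlE
  have key : ∀ j : ℕ, ∀ n, f n = ∑ i ∈ Finset.range j, g (n - l * i) + f (n - l * j) := by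
    intro j
    induction j with
    | zero => simp
    | succ j ih =>
      intro n
      rw [ih n, Finset.sum_range_succ, hfg (n - l * j)]
      push_cast
      ring_nf
  have hG : QuasiPoly (l * m) (fun n => ∑ i ∈ Finset.range m, g (n - l * i)) :=
    QuasiPoly.sum _ fun i _ => hg.shift _
  intro r
  obtain ⟨p, hp⟩ := hG (r + (l * m : ℕ))
  refine eventually_poly_of_diff (p := p) ?_
  filter_upwards [hp] with n hn
  rw [← hn, key m]
  push_cast
  ring_nf

/-- The number of exponent vectors `b ∈ Δ` of weighted degree `n`. -/
noncomputable def wcount {s : ℕ} (l : Fin s → ℕ) (Δ : Set (Fin s → ℕ)) (n : ℤ) : ℕ :=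
  {b | b ∈ Δ ∧ ((∑ i, l i * b i : ℕ) : ℤ) = n}.ncard

lemma finite_weight {s : ℕ} (l : Fin s → ℕ) (hl : ∀ i, 0 < l i) (n : ℤ) :
    {b : Fin s → ℕ | ((∑ i, l i * b i : ℕ) : ℤ) = n}.Finite := by
  refine (Set.finite_Iic (fun _ : Fin s => n.toNat)).subset fun b hb i => ?_
  have h1 : l i * b i ≤ ∑ i, l i * b i :=
    Finset.single_le_sum (f := fun i => l i * b i) (fun _ _ => Nat.zero_le _) (Finset.mem_univ i)
  have h2 : b i ≤ l i * b i := Nat.le_mul_of_pos_left _ (hl i)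
  simp only [Set.mem_ofPred_eq] at hb
  show b i ≤ n.toNat
  lia

/-- Peeling off the first coordinate of a set of exponent vectors. -/
lemma wcount_succ {s : ℕ} (l : Fin (s + 1) → ℕ) (hl : ∀ i, 0 < l i)
    (Δ : Set (Fin (s + 1) → ℕ)) (n : ℤ) :
    wcount l Δ n = wcount (fun i => l i.succ) {b | Fin.cons 0 b ∈ Δ} n +
      wcount l {b | b + Pi.single 0 1 ∈ Δ} (n - l 0) := by
  have hsplit : {b | b ∈ Δ ∧ ((∑ i, l i * b i : ℕ) : ℤ) = n} =
      (fun b : Fin s → ℕ => (Fin.cons 0 b : Fin (s + 1) → ℕ)) ''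
        {b | b ∈ {b : Fin s → ℕ | (Fin.cons 0 b : Fin (s + 1) → ℕ) ∈ Δ} ∧
          ((∑ i, l i.succ * b i : ℕ) : ℤ) = n} ∪
      (fun b => b + Pi.single 0 1) ''
        {b | b ∈ {b : Fin (s + 1) → ℕ | b + Pi.single 0 1 ∈ Δ} ∧
          ((∑ i, l i * b i : ℕ) : ℤ) = n - l 0} := by
    ext b
    simp only [Set.mem_ofPred_eq, Set.mem_union, Set.mem_image]
    constructor
    · rintro ⟨hb, hn⟩
      by_cases h0 : b 0 = 0
      · left
        refine ⟨Fin.tail b, ?_⟩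
        have : (Fin.cons 0 (Fin.tail b) : Fin (s + 1) → ℕ) = b := by
          rw [← h0]; exact Fin.cons_self_tail b
        refine ⟨⟨by rwa [this], ?_⟩, this⟩
        rw [Fin.sum_univ_succ, h0] at hn
        simpa [Fin.tail] using hn
      · right
        have hb' : b - Pi.single 0 1 + Pi.single 0 1 = b := by
          ext i
          refine Fin.cases ?_ (fun j => ?_) i
          · simp; lia
          · simp
        refine ⟨b - Pi.single 0 1, ⟨by rwa [hb'], ?_⟩, hb'⟩
        rw [← hn]
        conv_rhs => rw [← hb']
        simp only [Pi.add_apply, mul_add, Finset.sum_add_distrib]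
        have : ∑ i, l i * (Pi.single 0 1 : Fin (s + 1) → ℕ) i = l 0 := by
          simp [Fin.sum_univ_succ]
        rw [this]; push_cast; ring
    · rintro (⟨c, ⟨hc, hn⟩, rfl⟩ | ⟨c, ⟨hc, hn⟩, rfl⟩)
      · refine ⟨hc, ?_⟩
        rw [Fin.sum_univ_succ]
        simpa using hn
      · refine ⟨hc, ?_⟩
        simp only [Pi.add_apply, mul_add, Finset.sum_add_distrib]
        have : ∑ i, l i * (Pi.single 0 1 : Fin (s + 1) → ℕ) i = l 0 := by
          simp [Fin.sum_univ_succ]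
        rw [this]; push_cast at hn ⊢; linarith
  unfold wcount
  rw [hsplit, Set.ncard_union_eq ?_
    (((finite_weight _ (fun i => hl i.succ) n).subset fun b hb => hb.2).image _)
    (((finite_weight _ hl _).subset fun b hb => hb.2).image _),
    Set.ncard_image_of_injective, Set.ncard_image_of_injective]
  · exact add_left_injective _
  · exact Fin.cons_right_injective (α := fun _ => ℕ) 0
  · rw [Set.disjoint_left]
    rintro _ ⟨b, -, rfl⟩ ⟨c, -, hc⟩
    have := congrFun hc 0
    simp at this

/-- Dickson's lemma for slices: the slices of a lower set of exponent vectors stabilize. -/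
lemma exists_slice_stable {s : ℕ} (Δ : Set (Fin (s + 1) → ℕ)) (hΔ : IsLowerSet Δ) :
    ∃ j : ℕ, ∀ b : Fin (s + 1) → ℕ, b + Pi.single 0 j ∈ Δ → b + Pi.single 0 (j + 1) ∈ Δ := by
  have hpwo := Set.isPWO_of_wellQuasiOrderedLE {b | b ∉ Δ}
  have hfin : {b | Minimal (fun b => b ∈ {b | b ∉ Δ}) b}.Finite :=
    (setOfPred_minimal_antichain _).finite_of_partiallyWellOrderedOn
      (hpwo.mono (setOfPred_minimal_subset _))
  obtain ⟨N, hN⟩ := (hfin.image (fun b => b 0)).bddAbove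
  refine ⟨N, fun b hb => ?_⟩
  by_contra hcon
  obtain ⟨m, hm, hmin⟩ := hpwo.exists_le_minimal (a := b + Pi.single 0 (N + 1)) hcon
  have hmN : m 0 ≤ N := hN ⟨m, hmin, rfl⟩
  refine hmin.1 (hΔ (?_ : m ≤ b + Pi.single 0 N) hb)
  intro i
  have := hm i
  revert this
  refine Fin.cases ?_ (fun j => ?_) i
  · intro _; simp; lia
  · simp

/-- **Hilbert's theorem, combinatorial form**: the weighted counting function of a lower set of
exponent vectors is quasi-polynomial. -/
lemma quasiPoly_wcount {E : ℕ} (hE : 0 < E) : ∀ {s : ℕ} (l : Fin s → ℕ) (_ : ∀ i, 0 < l i)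
    (_ : ∀ i, l i ∣ E) (Δ : Set (Fin s → ℕ)) (_ : IsLowerSet Δ),
    QuasiPoly E (fun n => (wcount l Δ n : ℚ)) := by
  intro s
  induction s with
  | zero =>
    intro l _ _ Δ _ r
    refine ⟨0, ?_⟩
    filter_upwards [eventually_gt_atTop (-r).toNat] with n hn
    have hpos : 0 < (E : ℤ) * n + r := by
      have : (n : ℤ) ≤ E * n := by
        exact_mod_cast Nat.le_mul_of_pos_left n hE
      lia
    have : {b : Fin 0 → ℕ | b ∈ Δ ∧ ((∑ i, l i * b i : ℕ) : ℤ) = E * n + r} = ∅ := by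
      ext b; simp; lia
    simp only [wcount, this]; simp
  | succ s ih =>
    intro l hl hlE Δ hΔ
    obtain ⟨j, hj⟩ := exists_slice_stable Δ hΔ
    have hlow : ∀ i : ℕ, IsLowerSet {b : Fin (s + 1) → ℕ | b + Pi.single 0 i ∈ Δ} := by
      intro i a b hba ha
      exact hΔ (add_le_add_left hba _) ha
    have hslice : ∀ Δ' : Set (Fin (s + 1) → ℕ), IsLowerSet Δ' →
        IsLowerSet {b : Fin s → ℕ | (Fin.cons 0 b : Fin (s + 1) → ℕ) ∈ Δ'} := by
      intro Δ' h a b hba ha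
      refine h ?_ ha
      intro i
      refine Fin.cases ?_ (fun j => ?_) i
      · simp
      · simpa using hba j
    have hadd : ∀ i : ℕ, {b : Fin (s + 1) → ℕ | b + Pi.single 0 1 ∈
        {b : Fin (s + 1) → ℕ | b + Pi.single 0 i ∈ Δ}} =
        {b : Fin (s + 1) → ℕ | b + Pi.single 0 (i + 1) ∈ Δ} := by
      intro i
      ext b
      simp only [Set.mem_ofPred_eq, add_assoc, ← Pi.single_add, add_comm 1 i]
    have main : ∀ i ≤ j, QuasiPoly E
        (fun n => (wcount l {b : Fin (s + 1) → ℕ | b + Pi.single 0 (j - i) ∈ Δ} n : ℚ)) := by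
      intro i
      induction i with
      | zero =>
        intro _
        have hst : {b : Fin (s + 1) → ℕ | b + Pi.single 0 (j + 1) ∈ Δ} =
            {b : Fin (s + 1) → ℕ | b + Pi.single 0 j ∈ Δ} := by
          ext b
          refine ⟨fun h => hΔ ?_ h, hj b⟩
          gcongr
          simp
        refine QuasiPoly.of_diff (hlE 0)
          (ih (fun i => l i.succ) (fun i => hl _) (fun i => hlE _) _ (hslice _ (hlow j))) ?_
        intro n
        have := wcount_succ l hl {b : Fin (s + 1) → ℕ | b + Pi.single 0 j ∈ Δ} n
        rw [hadd, hst] at this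
        simp only [Nat.sub_zero]
        rw [this]; push_cast; rfl
      | succ i ihi =>
        intro hij
        have h1 := (ihi (by lia)).shift (l 0)
        have h2 := ih (fun i => l i.succ) (fun i => hl _) (fun i => hlE _) _
          (hslice _ (hlow (j - (i + 1))))
        convert h2.add h1 using 2 with n
        have := wcount_succ l hl {b : Fin (s + 1) → ℕ | b + Pi.single 0 (j - (i + 1)) ∈ Δ} n
        rw [hadd, show j - (i + 1) + 1 = j - i by lia] at this
        rw [this]; push_cast; rfl
    simpa using main j le_rfl
/-! ### Standard monomials -/

/-- The dimension of a span is the number of vectors that are not in the span of the earlier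
ones. -/
lemma finrank_span_eq_card_greedy {k V ι : Type*} [Field k] [AddCommGroup V] [Module k V]
    [LinearOrder ι] (v : ι → V) (s : Finset ι) :
    Module.finrank k (Submodule.span k (v '' s)) =
      {i | i ∈ s ∧ v i ∉ Submodule.span k (v '' {j | j ∈ s ∧ j < i})}.ncard := by
  classical
  induction s using Finset.induction_on_max with
  | empty =>
    rw [show v '' ((∅ : Finset ι) : Set ι) = ∅ by simp, Submodule.span_empty, finrank_bot]
    simp
  | insert a s hmax ih =>
    have ha : a ∉ s := fun h => lt_irrefl _ (hmax a h)
    have h1 : ∀ i ∈ s, {j | j ∈ insert a s ∧ j < i} = {j | j ∈ s ∧ j < i} := by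
      intro i hi
      ext j
      simp only [Finset.mem_insert, Set.mem_ofPred_eq]
      refine ⟨?_, fun h => ⟨Or.inr h.1, h.2⟩⟩
      rintro ⟨rfl | h, h'⟩
      · exact absurd h' (not_lt.2 (hmax i hi).le)
      · exact ⟨h, h'⟩
    have h2 : {j | j ∈ insert a s ∧ j < a} = (s : Set ι) := by
      ext j
      simp only [Finset.mem_insert, Set.mem_ofPred_eq, Finset.mem_coe]
      refine ⟨?_, fun h => ⟨Or.inr h, hmax j h⟩⟩
      rintro ⟨rfl | h, h'⟩
      · exact absurd h' (lt_irrefl _)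
      · exact h
    have hfin : {i | i ∈ s ∧ v i ∉ Submodule.span k (v '' {j | j ∈ s ∧ j < i})}.Finite :=
      s.finite_toSet.subset fun i hi => hi.1
    rw [Finset.coe_insert, Set.image_insert_eq, Submodule.span_insert, sup_comm]
    have : FiniteDimensional k (Submodule.span k (v '' (s : Set ι))) :=
      FiniteDimensional.span_of_finite k (s.finite_toSet.image v)
    by_cases hv : v a ∈ Submodule.span k (v '' (s : Set ι))
    · have : {i | i ∈ insert a s ∧ v i ∉ Submodule.span k (v '' {j | j ∈ insert a s ∧ j < i})} =
          {i | i ∈ s ∧ v i ∉ Submodule.span k (v '' {j | j ∈ s ∧ j < i})} := by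
        ext i
        simp only [Set.mem_ofPred_eq]
        constructor
        · rintro ⟨hi, hi'⟩
          rcases Finset.mem_insert.1 hi with rfl | hi
          · rw [h2] at hi'; exact absurd hv hi'
          · rw [h1 i hi] at hi'; exact ⟨hi, hi'⟩
        · rintro ⟨hi, hi'⟩
          exact ⟨Finset.mem_insert_of_mem hi, by rwa [h1 i hi]⟩
      rw [this, ← ih, sup_eq_left.2]
      simpa using hv
    · have : {i | i ∈ insert a s ∧ v i ∉ Submodule.span k (v '' {j | j ∈ insert a s ∧ j < i})} =
          insert a {i | i ∈ s ∧ v i ∉ Submodule.span k (v '' {j | j ∈ s ∧ j < i})} := by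
        ext i
        simp only [Set.mem_ofPred_eq, Set.mem_insert_iff]
        constructor
        · rintro ⟨hi, hi'⟩
          rcases Finset.mem_insert.1 hi with rfl | hi
          · exact Or.inl rfl
          · rw [h1 i hi] at hi'; exact Or.inr ⟨hi, hi'⟩
        · rintro (rfl | ⟨hi, hi'⟩)
          · exact ⟨Finset.mem_insert_self _ _, by rwa [h2]⟩
          · exact ⟨Finset.mem_insert_of_mem hi, by rwa [h1 i hi]⟩
      rw [this, Set.ncard_insert_of_notMem (fun h => ha h.1) hfin, ← ih]
      -- the finite-dimensional lemma is applied inside the span of all the vectors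
      set W := Submodule.span k (v '' (s : Set ι)) with hW
      have hd : W ⊓ Submodule.span k {v a} = ⊥ := by
        rw [← disjoint_iff]
        exact Submodule.disjoint_span_singleton_of_notMem hv
      have h0 : v a ≠ 0 := fun h => hv (h ▸ W.zero_mem)
      have := Submodule.finrank_sup_add_finrank_inf_eq W (Submodule.span k {v a})
      rw [hd, finrank_bot, finrank_span_singleton h0] at this
      simpa using this

/-- **Hilbert's theorem**: for a graded algebra spanned in degree `n` by the monomials
`ψ b` of weighted degree `n`, the dimensions of the graded pieces are counted by a lower set of
exponent vectors, the standard monomials for the lexicographic order; hence they are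
quasi-polynomial. -/
lemma exists_poly_finrank_span {k R : Type*} [Field k] [CommRing R] [Algebra k R] {s : ℕ}
    (l : Fin s → ℕ) (hl : ∀ i, 0 < l i) (ψ : (Fin s → ℕ) → R)
    (hψ : ∀ a b, ψ (a + b) = ψ a * ψ b) :
    ∃ E : ℕ, 0 < E ∧ ∃ p : ℚ[X], ∀ᶠ n : ℕ in atTop,
      (Module.finrank k (Submodule.span k (ψ '' {b | ∑ i, l i * b i = E * n})) : ℚ) =
        p.eval (n : ℚ) := by
  classical
  let w : (Fin s → ℕ) → ℕ := fun b => ∑ i, l i * b i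
  have hw : ∀ a b, w (a + b) = w a + w b := fun a b => by
    simp [w, mul_add, Finset.sum_add_distrib]
  let B : (Fin s → ℕ) → Set (Fin s → ℕ) := fun b => {c | w c = w b ∧ toLex c < toLex b}
  let Δ : Set (Fin s → ℕ) := {b | ψ b ∉ Submodule.span k (ψ '' B b)}
  have hΔ : IsLowerSet Δ := by
    intro b c hcb hb hc
    apply hb
    obtain ⟨e, rfl⟩ : ∃ e, b = e + c := ⟨b - c, by rw [tsub_add_cancel_of_le hcb]⟩
    rw [hψ]
    have : Submodule.span k (ψ '' B c) ≤
        (Submodule.span k (ψ '' B (e + c))).comap (LinearMap.mulLeft k (ψ e)) := by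
      rw [Submodule.span_le]
      rintro _ ⟨a, ⟨ha1, ha2⟩, rfl⟩
      refine Submodule.subset_span ⟨e + a, ⟨by rw [hw, hw, ha1], ?_⟩, hψ e a⟩
      rw [toLex_add, toLex_add]
      exact add_lt_add_right ha2 _
    exact this hc
  have hcount : ∀ n : ℕ, Module.finrank k (Submodule.span k (ψ '' {b | w b = n})) =
      wcount l Δ n := by
    intro n
    have hfin : {b | w b = n}.Finite := by
      refine (finite_weight l hl n).subset fun b hb => ?_
      have : w b = n := hb
      exact_mod_cast this
    let S : Finset (Lex (Fin s → ℕ)) := hfin.toFinset.map toLex.toEmbedding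
    have hS : ∀ x : Lex (Fin s → ℕ), x ∈ S ↔ w (ofLex x) = n := by
      intro x
      simp only [S, Finset.mem_map, Set.Finite.mem_toFinset, Set.mem_ofPred_eq]
      constructor
      · rintro ⟨a, ha, rfl⟩; exact ha
      · intro h; exact ⟨ofLex x, h, rfl⟩
    have h := finrank_span_eq_card_greedy (k := k) (fun x : Lex (Fin s → ℕ) => ψ (ofLex x)) S
    have e1 : (fun x : Lex (Fin s → ℕ) => ψ (ofLex x)) '' S = ψ '' {b | w b = n} := by
      ext r
      constructor
      · rintro ⟨x, hx, rfl⟩; exact ⟨ofLex x, (hS x).1 hx, rfl⟩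
      · rintro ⟨x, hx, rfl⟩; exact ⟨toLex x, (hS _).2 hx, rfl⟩
    rw [e1] at h
    rw [h, wcount, ← Set.ncard_image_of_injective _ (toLex (α := Fin s → ℕ)).injective]
    congr 1
    ext x
    have e2 : w (ofLex x) = n → (fun x : Lex (Fin s → ℕ) => ψ (ofLex x)) '' {j | j ∈ S ∧ j < x} =
        ψ '' B (ofLex x) := by
      intro hx
      ext r
      constructor
      · rintro ⟨y, ⟨hy, hy'⟩, rfl⟩; exact ⟨ofLex y, ⟨((hS y).1 hy).trans hx.symm, hy'⟩, rfl⟩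
      · rintro ⟨y, ⟨hy, hy'⟩, rfl⟩; exact ⟨toLex y, ⟨(hS _).2 (hy.trans hx), hy'⟩, rfl⟩
    constructor
    · rintro ⟨hx, hx'⟩
      have hx0 := (hS x).1 hx
      replace hx' : ψ (ofLex x) ∉ Submodule.span k
        ((fun x : Lex (Fin s → ℕ) => ψ (ofLex x)) '' {j | j ∈ S ∧ j < x}) := hx'
      rw [e2 hx0] at hx'
      exact ⟨ofLex x, ⟨hx', by exact_mod_cast hx0⟩, rfl⟩
    · rintro ⟨y, ⟨hy, hy'⟩, rfl⟩
      have hx0 : w (ofLex (toLex y)) = n := by exact_mod_cast hy'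
      refine ⟨(hS _).2 hx0, ?_⟩
      change ψ y ∉ Submodule.span k
        ((fun x : Lex (Fin s → ℕ) => ψ (ofLex x)) '' {j | j ∈ S ∧ j < toLex y})
      rw [e2 hx0]
      exact hy
  have hE : 0 < ∏ i, l i := Finset.prod_pos fun i _ => hl i
  refine ⟨∏ i, l i, hE, ?_⟩
  obtain ⟨p, hp⟩ := quasiPoly_wcount hE l hl (fun i => Finset.dvd_prod_of_mem l (Finset.mem_univ i))
    Δ hΔ 0
  refine ⟨p, ?_⟩
  filter_upwards [hp] with n hn
  rw [← hn, hcount]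
  push_cast
  rw [add_zero]

/-! ### Bihomogeneous monomials in the powers of a homogeneous ideal -/

section Monomials

variable {k R : Type*} [Field k] [CommRing R] [Algebra k R] {r t : ℕ}

/-- The monomial `x^α f^β`, as an element of `R`; the exponent vector is `(α, β)`. -/
def mono (x : Fin r → R) (f : Fin t → R) (a : Fin r ⊕ Fin t → ℕ) : R :=
  (∏ i, x i ^ a (Sum.inl i)) * ∏ j, f j ^ a (Sum.inr j)

/-- The number of factors from `f` in the monomial `x^α f^β`. -/
def wt₁ (a : Fin r ⊕ Fin t → ℕ) : ℕ := ∑ j, a (Sum.inr j)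

/-- The degree in `R` of the monomial `x^α f^β`, when `f j` has degree `δ j`. -/
def wt₂ (δ : Fin t → ℕ) (a : Fin r ⊕ Fin t → ℕ) : ℕ :=
  ∑ i, a (Sum.inl i) + ∑ j, δ j * a (Sum.inr j)

lemma mono_add (x : Fin r → R) (f : Fin t → R) (a b : Fin r ⊕ Fin t → ℕ) :
    mono x f (a + b) = mono x f a * mono x f b := by
  simp only [mono, Pi.add_apply, pow_add, Finset.prod_mul_distrib]
  ring

lemma wt₁_add (a b : Fin r ⊕ Fin t → ℕ) : wt₁ (a + b) = wt₁ a + wt₁ b := by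
  simp [wt₁, Finset.sum_add_distrib]

lemma wt₂_add (δ : Fin t → ℕ) (a b : Fin r ⊕ Fin t → ℕ) :
    wt₂ δ (a + b) = wt₂ δ a + wt₂ δ b := by
  simp only [wt₂, Pi.add_apply, mul_add, Finset.sum_add_distrib]
  ring

lemma mono_single_inl (x : Fin r → R) (f : Fin t → R) (i : Fin r) :
    mono x f (Pi.single (Sum.inl i) 1) = x i := by
  simp [mono, Pi.single_apply, Finset.prod_ite_eq', pow_ite]

lemma mono_single_inr (x : Fin r → R) (f : Fin t → R) (j : Fin t) :
    mono x f (Pi.single (Sum.inr j) 1) = f j := by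
  simp [mono, Pi.single_apply, Finset.prod_ite_eq', pow_ite]

lemma wt₁_single_inl (i : Fin r) : wt₁ (Pi.single (Sum.inl i) 1 : Fin r ⊕ Fin t → ℕ) = 0 := by
  simp [wt₁]

lemma wt₁_single_inr (j : Fin t) : wt₁ (Pi.single (Sum.inr j) 1 : Fin r ⊕ Fin t → ℕ) = 1 := by
  simp [wt₁, Pi.single_apply]

lemma wt₂_single_inl (δ : Fin t → ℕ) (i : Fin r) :
    wt₂ δ (Pi.single (Sum.inl i) 1 : Fin r ⊕ Fin t → ℕ) = 1 := by
  simp [wt₂, Pi.single_apply]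

lemma wt₂_single_inr (δ : Fin t → ℕ) (j : Fin t) :
    wt₂ δ (Pi.single (Sum.inr j) 1 : Fin r ⊕ Fin t → ℕ) = δ j := by
  simp [wt₂, Pi.single_apply]

/-- The span of the monomials of bidegree `(n, m)`. -/
def monoSpan (k : Type*) [Field k] [Algebra k R] (x : Fin r → R) (f : Fin t → R)
    (δ : Fin t → ℕ) (n m : ℕ) : Submodule k R :=
  Submodule.span k (mono x f '' {a | wt₁ a = n ∧ wt₂ δ a = m})

variable (x : Fin r → R) (f : Fin t → R) (δ : Fin t → ℕ)

lemma mono_mul_mem_monoSpan {n m n' m' : ℕ} {a : Fin r ⊕ Fin t → ℕ} (h₁ : wt₁ a = n')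
    (h₂ : wt₂ δ a = m') {y : R} (hy : y ∈ monoSpan k x f δ n m) :
    mono x f a * y ∈ monoSpan k x f δ (n' + n) (m' + m) := by
  have : monoSpan k x f δ n m ≤
      (monoSpan k x f δ (n' + n) (m' + m)).comap (LinearMap.mulLeft k (mono x f a)) := by
    unfold monoSpan
    rw [Submodule.span_le]
    rintro _ ⟨b, ⟨hb1, hb2⟩, rfl⟩
    exact Submodule.subset_span
      ⟨a + b, ⟨by rw [wt₁_add, h₁, hb1], by rw [wt₂_add, h₂, hb2]⟩, mono_add x f a b⟩
  exact this hy

variable {x f δ} {𝒜 : ℕ → Submodule k R}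

lemma homogeneous_le_monoSpan (hSG : IsStandardGraded k 𝒜)
    (hx : 𝒜 1 = Submodule.span k (Set.range x)) (m : ℕ) : 𝒜 m ≤ monoSpan k x f δ 0 m := by
  induction m with
  | zero =>
    rw [hSG.1, Submodule.span_le]
    rintro _ rfl
    refine Submodule.subset_span ⟨0, ⟨by simp [wt₁], by simp [wt₂]⟩, by simp [mono]⟩
  | succ m ih =>
    rw [hSG.2.1, Submodule.mul_le]
    intro y hy z hz
    rw [hx] at hy
    have : Submodule.span k (Set.range x) ≤
        (monoSpan k x f δ 0 (m + 1)).comap (LinearMap.mulRight k z) := by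
      rw [Submodule.span_le]
      rintro _ ⟨i, rfl⟩
      have := mono_mul_mem_monoSpan x f δ (wt₁_single_inl i) (wt₂_single_inl δ i) (ih hz)
      rw [mono_single_inl, zero_add, add_comm] at this
      exact this
    exact this hy

variable [GradedAlgebra 𝒜]

lemma prod_pow_mem_graded {t : ℕ} {f : Fin t → R} {δ : Fin t → ℕ} (hf : ∀ j, f j ∈ 𝒜 (δ j))
    (b : Fin t → ℕ) : ∏ j, f j ^ b j ∈ 𝒜 (∑ j, δ j * b j) := by
  refine SetLike.prod_mem_graded 𝒜 _ _ fun j _ => ?_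
  have := SetLike.pow_mem_graded (b j) (hf j)
  rwa [smul_eq_mul, mul_comm] at this

lemma mono_mem_graded (hx : ∀ i, x i ∈ 𝒜 1) (hf : ∀ j, f j ∈ 𝒜 (δ j)) (a : Fin r ⊕ Fin t → ℕ) :
    mono x f a ∈ 𝒜 (wt₂ δ a) := by
  have h1 := prod_pow_mem_graded (𝒜 := 𝒜) (δ := fun _ => 1) hx (fun i => a (Sum.inl i))
  have h2 := prod_pow_mem_graded (𝒜 := 𝒜) hf (fun i => a (Sum.inr i))
  simpa [mono, wt₂] using SetLike.mul_mem_graded h1 h2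

lemma prod_pow_mem_pow {t : ℕ} {f : Fin t → R} {I : Ideal R} (hf : ∀ j, f j ∈ I)
    (b : Fin t → ℕ) : ∏ j, f j ^ b j ∈ I ^ (∑ j, b j) := by
  rw [← Finset.prod_pow_eq_pow_sum]
  exact Ideal.prod_mem_prod fun j _ => Ideal.pow_mem_pow (hf j) _

lemma mono_mem_pow {I : Ideal R} (hf : ∀ j, f j ∈ I) (a : Fin r ⊕ Fin t → ℕ) :
    mono x f a ∈ I ^ wt₁ a :=
  Ideal.mul_mem_left _ _ (prod_pow_mem_pow hf _)

lemma decompose_pow_mem_monoSpan (hSG : IsStandardGraded k 𝒜)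
    (hx : 𝒜 1 = Submodule.span k (Set.range x)) (hf : ∀ j, f j ∈ 𝒜 (δ j)) (n : ℕ) :
    ∀ (m : ℕ), ∀ y ∈ Ideal.span (Set.range f) ^ n,
      (DirectSum.decompose 𝒜 y m : R) ∈ monoSpan k x f δ n m := by
  induction n with
  | zero => exact fun m y _ => homogeneous_le_monoSpan hSG hx m (SetLike.coe_mem _)
  | succ n ih =>
    intro m y hy
    rw [pow_succ'] at hy
    induction hy using Submodule.mul_induction_on' with
    | mem_mul_mem a ha b hb =>
      obtain ⟨c, rfl⟩ := (Ideal.mem_span_range_iff_exists_fun).1 ha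
      rw [Finset.sum_mul, DirectSum.decompose_sum, DFinsupp.finsetSum_apply,
        AddSubmonoidClass.coe_finsetSum]
      refine Submodule.sum_mem _ fun j _ => ?_
      rw [mul_comm (c j), mul_assoc]
      classical
      rw [DirectSum.coe_decompose_mul_of_left_mem 𝒜 m (hf j)]
      split_ifs with hjm
      · have := mono_mul_mem_monoSpan x f δ (wt₁_single_inr j) (wt₂_single_inr δ j)
          (ih (m - δ j) (c j * b) (Ideal.mul_mem_left _ _ hb))
        rwa [mono_single_inr, add_comm 1 n, Nat.add_sub_cancel' hjm] at this
      · exact Submodule.zero_mem _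
    | add a _ b _ ha hb =>
      rw [DirectSum.decompose_add, DirectSum.add_apply, Submodule.coe_add]
      exact Submodule.add_mem _ ha hb

/-- The degree `m` component of `Iⁿ` is spanned by the monomials of bidegree `(n, m)`. -/
lemma idealComp_pow_eq_monoSpan (hSG : IsStandardGraded k 𝒜)
    (hx : 𝒜 1 = Submodule.span k (Set.range x)) (hf : ∀ j, f j ∈ 𝒜 (δ j)) (n m : ℕ) :
    idealComp k 𝒜 (Ideal.span (Set.range f) ^ n) m = monoSpan k x f δ n m := by
  apply le_antisymm
  · rintro y ⟨hy1, hy2⟩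
    have := decompose_pow_mem_monoSpan hSG hx hf n m y hy1
    rwa [DirectSum.decompose_of_mem_same 𝒜 hy2] at this
  · unfold monoSpan
    rw [Submodule.span_le]
    rintro _ ⟨a, ⟨rfl, rfl⟩, rfl⟩
    exact ⟨mono_mem_pow (fun j => Ideal.subset_span (Set.mem_range_self j)) a,
      mono_mem_graded (fun i => hx ▸ Submodule.subset_span (Set.mem_range_self i)) hf a⟩

end Monomials

/-- A standard graded algebra has finitely many degree-one generators. -/
lemma exists_deg_one_gens {k R : Type*} [Field k] [CommRing R] [Algebra k R]
    {𝒜 : ℕ → Submodule k R} (hSG : IsStandardGraded k 𝒜) :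
    ∃ (r : ℕ) (x : Fin r → R), 𝒜 1 = Submodule.span k (Set.range x) := by
  obtain ⟨n, s, hs⟩ := Submodule.fg_iff_exists_fin_generating_family.1 hSG.2.2
  exact ⟨n, s, hs.symm⟩

/-- A homogeneous ideal of a Noetherian graded ring has finitely many homogeneous generators. -/
lemma exists_homogeneous_gens {k R : Type*} [Field k] [CommRing R] [IsNoetherianRing R]
    [Algebra k R] (𝒜 : ℕ → Submodule k R) [GradedAlgebra 𝒜] {I : Ideal R}
    (hI : I.IsHomogeneous 𝒜) :
    ∃ (t : ℕ) (f : Fin t → R) (δ : Fin t → ℕ), (∀ j, f j ∈ 𝒜 (δ j)) ∧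
      I = Ideal.span (Set.range f) := by
  obtain ⟨S, hS⟩ := (Ideal.IsHomogeneous.iff_exists 𝒜 I).1 hI
  obtain ⟨s, hs, hs'⟩ := Submodule.fg_span_iff_fg_span_finset_subset _ |>.1
    (hS ▸ IsNoetherian.noetherian I)
  have hs' : I = Ideal.span (s : Set R) := hS.trans hs'
  have hd : ∀ y : s, ∃ d, (y : R) ∈ 𝒜 d := by
    intro y
    obtain ⟨z, -, hz⟩ := hs y.2
    rw [← hz]
    exact z.2
  choose d hd using hd
  refine ⟨s.card, fun j => s.equivFin.symm j, fun j => d (s.equivFin.symm j), fun j => hd _, ?_⟩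
  rw [hs']
  congr 1
  ext y
  constructor
  · intro hy; exact ⟨s.equivFin ⟨y, hy⟩, by simp⟩
  · rintro ⟨j, rfl⟩; exact (s.equivFin.symm j).2

/-- Along every rational ray, the function `(n, m) ↦ ℓ_k((Iⁿ)_m)` is polynomial on a
subprogression. By Gordan's lemma the monomials with bidegree on the ray form a finitely
generated monoid, so the diagonal subalgebra is finitely generated. -/
lemma exists_poly_compLen {k R : Type*} [Field k] [CommRing R] [IsNoetherianRing R]
    [Algebra k R] {𝒜 : ℕ → Submodule k R} [GradedAlgebra 𝒜] (hSG : IsStandardGraded k 𝒜)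
    {I : Ideal R} (hI : I.IsHomogeneous 𝒜) (p q : ℕ) :
    ∃ E : ℕ, 0 < E ∧ ∃ P : ℚ[X], ∀ᶠ n : ℕ in atTop,
      (compLen k 𝒜 (I ^ (q * (E * n))) (p * (E * n)) : ℚ) = P.eval (n : ℚ) := by
  obtain ⟨r, x, hx⟩ := exists_deg_one_gens hSG
  obtain ⟨t, f, δ, hf, rfl⟩ := exists_homogeneous_gens 𝒜 hI
  -- A vector `c` encodes an exponent vector `a c` together with its position `c none` on the ray;
  -- the equalizer of `F` and `G` consists of the `c` with `a c` of bidegree `c none • (q, p)`.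
  let a : (Option (Fin r ⊕ Fin t) → ℕ) → (Fin r ⊕ Fin t → ℕ) := fun c i => c (some i)
  let F : (Option (Fin r ⊕ Fin t) → ℕ) →+ ℕ × ℕ :=
    { toFun := fun c => (wt₁ (a c), wt₂ δ (a c))
      map_zero' := by simp [a, wt₁, wt₂]
      map_add' := fun c d => Prod.ext (wt₁_add (a c) (a d)) (wt₂_add δ (a c) (a d)) }
  let G : (Option (Fin r ⊕ Fin t) → ℕ) →+ ℕ × ℕ :=
    { toFun := fun c => (q * c none, p * c none)
      map_zero' := by simp
      map_add' := fun c d => Prod.ext (mul_add _ _ _) (mul_add _ _ _) }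
  obtain ⟨S, hS⟩ := AddSubmonoid.fg_eqLocusM F G
  have hmem : ∀ c, c ∈ F.eqLocusM G ↔ wt₁ (a c) = q * c none ∧ wt₂ δ (a c) = p * c none := by
    intro c; exact Prod.ext_iff
  -- the zero vector is removed because the weights `l` have to be positive
  let S' := S.erase 0
  let g : Fin S'.card → Option (Fin r ⊕ Fin t) → ℕ := fun i => S'.equivFin.symm i
  have hgS : ∀ i, g i ∈ F.eqLocusM G := by
    intro i
    rw [← hS]
    exact AddSubmonoid.subset_closure (Finset.mem_of_mem_erase (S'.equivFin.symm i).2)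
  have hg0 : ∀ i, g i ≠ 0 := fun i => Finset.ne_of_mem_erase (S'.equivFin.symm i).2
  let l : Fin S'.card → ℕ := fun i => g i none
  have hl : ∀ i, 0 < l i := by
    intro i
    rw [Nat.pos_iff_ne_zero]
    intro h0
    apply hg0 i
    obtain ⟨h1, h2⟩ := (hmem _).1 (hgS i)
    rw [show g i none = 0 from h0, mul_zero] at h1 h2
    simp only [wt₁, wt₂, Finset.sum_eq_zero_iff, Nat.add_eq_zero_iff, Finset.mem_univ,
      true_implies] at h1 h2
    funext o
    match o with
    | none => exact h0
    | some (Sum.inl i') => exact h2.1 i'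
    | some (Sum.inr j) => exact h1 j
  let comb : (Fin S'.card → ℕ) → Option (Fin r ⊕ Fin t) → ℕ := fun b o => ∑ i, b i * g i o
  have hcomb_add : ∀ b c, comb (b + c) = comb b + comb c := by
    intro b c
    funext o
    simp [comb, add_mul, Finset.sum_add_distrib]
  have hcomb_none : ∀ b, comb b none = ∑ i, l i * b i := by
    intro b
    simp [comb, l, mul_comm]
  have hsurj : ∀ c ∈ F.eqLocusM G, ∃ b, comb b = c := by
    intro c hc
    rw [← hS] at hc
    induction hc using AddSubmonoid.closure_induction with
    | mem c hc =>
      by_cases h0 : c = 0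
      · exact ⟨0, by funext o; simp [comb, h0]⟩
      · have hc' : c ∈ S' := Finset.mem_erase.2 ⟨h0, hc⟩
        refine ⟨Pi.single (S'.equivFin ⟨c, hc'⟩) 1, ?_⟩
        funext o
        simp [comb, g, Pi.single_apply, ite_mul]
    | zero => exact ⟨0, by funext o; simp [comb]⟩
    | add c d _ _ hc hd =>
      obtain ⟨b, rfl⟩ := hc
      obtain ⟨b', rfl⟩ := hd
      exact ⟨b + b', hcomb_add _ _⟩
  have hcomb_mem : ∀ b, comb b ∈ F.eqLocusM G := fun b => by
    have h : comb b = ∑ i, b i • g i := by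
      funext o
      simp only [comb, Finset.sum_apply, Pi.smul_apply, smul_eq_mul]
    rw [h]
    exact AddSubmonoid.sum_mem _ fun i _ => AddSubmonoid.nsmul_mem _ (hgS i) _
  obtain ⟨E, hE, P, hP⟩ := exists_poly_finrank_span (k := k) l hl
    (fun b => mono x f (a (comb b))) (by
      intro b c
      rw [hcomb_add, ← mono_add]; rfl)
  refine ⟨E, hE, P, ?_⟩
  filter_upwards [hP] with n hn
  rw [← hn, compLen, idealComp_pow_eq_monoSpan hSG hx hf, monoSpan]
  have hset : mono x f '' {e | wt₁ e = q * (E * n) ∧ wt₂ δ e = p * (E * n)} =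
      (fun b => mono x f (a (comb b))) '' {b | ∑ i, l i * b i = E * n} := by
    ext y
    constructor
    · rintro ⟨e, ⟨he1, he2⟩, rfl⟩
      let c : Option (Fin r ⊕ Fin t) → ℕ := fun o => o.elim (E * n) e
      obtain ⟨b, hb⟩ := hsurj c ((hmem c).2 ⟨he1, he2⟩)
      refine ⟨b, ?_, ?_⟩
      · show _ = _
        rw [← hcomb_none, hb]; rfl
      · show mono x f (a (comb b)) = _
        rw [hb]; rfl
    · rintro ⟨b, hb, rfl⟩
      replace hb : ∑ i, l i * b i = E * n := hb
      have := (hmem _).1 (hcomb_mem b)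
      rw [hcomb_none, hb] at this
      exact ⟨a (comb b), this, rfl⟩
  rw [hset]

/-! ### Densities of bigraded length functions -/

/-- A polynomial over `ℚ` whose values at the natural numbers are `O(nᵉ)` has a limit after
division by `nᵉ`. -/
lemma tendsto_eval_div_pow (P : ℚ[X]) (e : ℕ) (B : ℝ)
    (hB : ∀ᶠ n : ℕ in atTop, |((P.eval (n : ℚ) : ℚ) : ℝ)| ≤ B * (n : ℝ) ^ e) :
    ∃ L : ℝ, Tendsto (fun n : ℕ => ((P.eval (n : ℚ) : ℚ) : ℝ) / (n : ℝ) ^ e) atTop (nhds L) := by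
  let P' : ℝ[X] := P.map (algebraMap ℚ ℝ)
  have hev : ∀ n : ℕ, ((P.eval (n : ℚ) : ℚ) : ℝ) = P'.eval (n : ℝ) := by
    intro n
    have := Polynomial.eval_map_algebraMap (B := ℝ) P (n : ℝ)
    rw [show P'.eval (n : ℝ) = (P.map (algebraMap ℚ ℝ)).eval (n : ℝ) from rfl,
      ← map_natCast (algebraMap ℚ ℝ) n, Polynomial.eval_map_apply]
    rfl
  have hX : ∀ n : ℕ, (n : ℝ) ^ e = (X ^ e : ℝ[X]).eval (n : ℝ) := by simp
  simp only [hev, hX] at hB ⊢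
  have hcast : Tendsto (fun n : ℕ => (n : ℝ)) atTop atTop := tendsto_natCast_atTop_atTop
  rcases lt_trichotomy P'.degree (X ^ e : ℝ[X]).degree with h | h | h
  · exact ⟨0, (Polynomial.div_tendsto_atTop_zero_of_degree_lt _ _ h).comp hcast⟩
  · exact ⟨_, (Polynomial.div_tendsto_atTop_leadingCoeff_div_of_degree_eq _ _ h).comp hcast⟩
  · exfalso
    have ht := (Polynomial.abs_div_tendsto_atTop_atTop_of_degree_gt P' (X ^ e) h
      (pow_ne_zero _ X_ne_zero)).comp hcast
    obtain ⟨n, hn1, hn2, hn0⟩ :=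
      ((ht.eventually_gt_atTop B).and (hB.and (eventually_gt_atTop 0))).exists
    have hpos : 0 < (X ^ e : ℝ[X]).eval (n : ℝ) := by
      rw [← hX]; positivity
    simp only [Function.comp_apply] at hn1
    rw [abs_div, abs_of_pos hpos, lt_div_iff₀ hpos] at hn1
    linarith

section Density

variable {h : ℕ → ℕ → ℕ} {e D : ℕ} {C : ℝ}

/-- The normalised length function `x ↦ h(n, ⌊xn⌋) / nᵉ`. -/
noncomputable def ratio (h : ℕ → ℕ → ℕ) (e n : ℕ) (x : ℝ) : ℝ :=
  (h n ⌊x * (n : ℝ)⌋₊ : ℝ) / (n : ℝ) ^ e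

lemma ratio_nonneg (n : ℕ) (x : ℝ) : 0 ≤ ratio h e n x := by unfold ratio; positivity

lemma ratio_mono (hm : ∀ n m, h n m ≤ h n (m + 1)) (n : ℕ) : Monotone (ratio h e n) := by
  intro x y hxy
  unfold ratio
  have : Monotone (h n) := monotone_nat_of_le_succ (hm n)
  gcongr
  exact this (Nat.floor_mono (by gcongr))

lemma ratio_le (hb : ∀ n m, (h n m : ℝ) ≤ C * ((m : ℝ) + 1) ^ e) {n : ℕ} (hn : 0 < n) {x c : ℝ}
    (hc : 0 ≤ c) (hxc : x ≤ c) : ratio h e n x ≤ C * (c + 1) ^ e := by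
  have hn' : (1 : ℝ) ≤ n := by exact_mod_cast hn
  have hC : 0 ≤ C := by
    have := hb 0 0
    simp only [Nat.cast_zero, zero_add, one_pow, mul_one] at this
    exact le_trans (Nat.cast_nonneg _) this
  unfold ratio
  rw [div_le_iff₀ (by positivity)]
  refine (hb _ _).trans ?_
  rw [mul_assoc, ← mul_pow]
  have hfl : (⌊x * (n : ℝ)⌋₊ : ℝ) ≤ c * n := by
    calc (⌊x * (n : ℝ)⌋₊ : ℝ) ≤ ⌊c * (n : ℝ)⌋₊ := by
          exact_mod_cast Nat.floor_mono (by gcongr)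
      _ ≤ c * n := Nat.floor_le (by positivity)
  gcongr
  linarith

/-- Along a rational ray, the normalised lengths converge on a subprogression. -/
lemma exists_ray_limit (hb : ∀ n m, (h n m : ℝ) ≤ C * ((m : ℝ) + 1) ^ e)
    (hp : ∀ p q : ℕ, ∃ E : ℕ, 0 < E ∧ ∃ P : ℚ[X], ∀ᶠ n : ℕ in atTop,
      (h (q * (E * n)) (p * (E * n)) : ℚ) = P.eval (n : ℚ)) (p q : ℕ) :
    ∃ E : ℕ, 0 < E ∧ ∃ L : ℝ, Tendsto
      (fun n : ℕ => (h (q * E * n) (p * E * n) : ℝ) / (n : ℝ) ^ e) atTop (nhds L) := by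
  obtain ⟨E, hE, P, hP⟩ := hp p q
  have hC : 0 ≤ C := by
    have := hb 0 0
    simp only [Nat.cast_zero, zero_add, one_pow, mul_one] at this
    exact le_trans (Nat.cast_nonneg _) this
  have hP' : ∀ᶠ n : ℕ in atTop,
      (h (q * E * n) (p * E * n) : ℝ) = ((P.eval (n : ℚ) : ℚ) : ℝ) := by
    filter_upwards [hP] with n hn
    rw [← hn, mul_assoc, mul_assoc]
    norm_cast
  obtain ⟨L, hL⟩ := tendsto_eval_div_pow P e (C * ((p * E : ℕ) + 1 : ℝ) ^ e) (by
    filter_upwards [hP', eventually_ge_atTop 1] with n hn hn1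
    rw [← hn, abs_of_nonneg (Nat.cast_nonneg _), mul_assoc C, ← mul_pow]
    refine (hb _ _).trans ?_
    have : (1 : ℝ) ≤ n := by exact_mod_cast hn1
    gcongr
    push_cast
    nlinarith)
  refine ⟨E, hE, L, hL.congr' ?_⟩
  filter_upwards [hP'] with n hn
  rw [hn]

lemma tendsto_div_self {Q : ℕ} : Tendsto (fun n : ℕ => ((n / Q : ℕ) : ℝ) / (n : ℝ)) atTop
    (nhds ((Q : ℝ)⁻¹)) := by
  have := (tendsto_nat_floor_mul_div_atTop (R := ℝ) (a := (Q : ℝ)⁻¹) (by positivity)).comp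
    tendsto_natCast_atTop_atTop
  refine this.congr fun n => ?_
  simp only [Function.comp_apply]
  rw [inv_mul_eq_div, Nat.floor_div_eq_div]

/-- The normalised lengths at `x` are asymptotically dominated by those at any `y > x`: both
are compared with the limit along a rational ray of slope strictly between `x` and `y`. -/
lemma exists_separating (hm : ∀ n m, h n m ≤ h n (m + 1)) (hs : ∀ n m, h n m ≤ h (n + 1) (m + D))
    (hb : ∀ n m, (h n m : ℝ) ≤ C * ((m : ℝ) + 1) ^ e)
    (hp : ∀ p q : ℕ, ∃ E : ℕ, 0 < E ∧ ∃ P : ℚ[X], ∀ᶠ n : ℕ in atTop,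
      (h (q * (E * n)) (p * (E * n)) : ℚ) = P.eval (n : ℚ))
    {x y : ℝ} (hx : 0 ≤ x) (hxy : x < y) :
    ∃ L : ℝ, (∀ c, L < c → ∀ᶠ n in atTop, ratio h e n x < c) ∧
      (∀ c, c < L → ∀ᶠ n in atTop, c < ratio h e n y) := by
  have hmono : ∀ n, Monotone (h n) := fun n => monotone_nat_of_le_succ (hm n)
  have hshift : ∀ j n m, h n m ≤ h (n + j) (m + D * j) := by
    intro j
    induction j with
    | zero => intro n m; simp
    | succ j ih =>
      exact fun n m => (ih n m).trans
        ((hs _ _).trans_eq (by rw [mul_add, mul_one, add_assoc, add_assoc]))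
  obtain ⟨r, hr1, hr2⟩ := exists_rat_btwn hxy
  have hr0 : 0 < r := by
    have : (0 : ℝ) < r := lt_of_le_of_lt hx hr1
    exact_mod_cast this
  obtain ⟨E, hE, L, hL⟩ := exists_ray_limit hb hp r.num.toNat r.den
  set Q := r.den * E with hQ
  set P := r.num.toNat * E with hP
  have hQ0 : 0 < Q := Nat.mul_pos r.den_pos hE
  have hQ0' : (0 : ℝ) < Q := by exact_mod_cast hQ0
  have hPQ : (P : ℝ) = r * Q := by
    have h1 : ((r.num.toNat : ℕ) : ℤ) = r.num := Int.toNat_of_nonneg (Rat.num_nonneg.2 hr0.le)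
    have h2 : ((r.num.toNat : ℕ) : ℝ) = r * r.den := by
      have h3 : (r : ℝ) * (r.den : ℝ) = ((r * r.den : ℚ) : ℝ) := by push_cast; rfl
      rw [h3, Rat.mul_den_eq_num, ← h1]
      push_cast; rfl
    rw [hP, hQ]
    push_cast
    rw [h2]; ring
  have hdiv := tendsto_div_self (Q := Q)
  have hk : Tendsto (fun n : ℕ => n / Q) atTop atTop := Nat.tendsto_div_const_atTop hQ0.ne'
  refine ⟨L * ((Q : ℝ)⁻¹) ^ e, fun c hc => ?_, fun c hc => ?_⟩
  · have hdiv' : Tendsto (fun n : ℕ => ((n / Q + 1 : ℕ) : ℝ) / (n : ℝ)) atTop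
        (nhds ((Q : ℝ)⁻¹)) := by
      have := hdiv.add (tendsto_one_div_atTop_nhds_zero_nat (𝕜 := ℝ))
      rw [add_zero] at this
      refine this.congr fun n => ?_
      push_cast; ring
    have hu := (hL.comp ((tendsto_add_atTop_nat 1).comp hk)).mul (hdiv'.pow e)
    have hlarge : ∀ᶠ n : ℕ in atTop, D * Q / (r - x) ≤ (n : ℝ) :=
      tendsto_natCast_atTop_atTop.eventually_ge_atTop _
    filter_upwards [hu.eventually_lt_const hc, hlarge, eventually_gt_atTop 0] with n hn hnl hn0
    refine lt_of_le_of_lt ?_ hn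
    simp only [Function.comp_apply]
    set κ := n / Q + 1 with hκ
    have hκ0 : 0 < (κ : ℝ) := by rw [hκ]; positivity
    have hn0' : 0 < (n : ℝ) := by exact_mod_cast hn0
    rw [div_pow, div_mul_div_cancel₀ (by positivity)]
    unfold ratio
    have hQκ : n ≤ Q * κ ∧ Q * κ ≤ n + Q := by
      have h1 := Nat.div_add_mod n Q
      have h2 := Nat.mod_lt n hQ0
      rw [hκ, mul_add, mul_one]
      omega
    have hle : h n ⌊x * (n : ℝ)⌋₊ ≤ h (Q * κ) (P * κ) := by
      have h1 := hshift (Q * κ - n) n ⌊x * (n : ℝ)⌋₊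
      rw [Nat.add_sub_cancel' hQκ.1] at h1
      refine h1.trans (hmono _ ?_)
      have h2 : D * (Q * κ - n) ≤ D * Q := Nat.mul_le_mul_left _ (by omega)
      refine (Nat.add_le_add_left h2 _).trans ?_
      have h3 : (⌊x * (n : ℝ)⌋₊ : ℝ) ≤ x * n := Nat.floor_le (by positivity)
      have h4 : (n : ℝ) ≤ Q * κ := by exact_mod_cast hQκ.1
      rw [div_le_iff₀ (by linarith)] at hnl
      have h5 : (r : ℝ) * n ≤ P * κ := by
        rw [hPQ, mul_assoc]
        exact mul_le_mul_of_nonneg_left h4 (by exact_mod_cast hr0.le)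
      have h6 : ((⌊x * (n : ℝ)⌋₊ + D * Q : ℕ) : ℝ) ≤ ((P * κ : ℕ) : ℝ) := by
        push_cast
        linarith
      exact_mod_cast h6
    gcongr
  · have hu := (hL.comp hk).mul (hdiv.pow e)
    have hlarge : ∀ᶠ n : ℕ in atTop, D * Q / (y - r) ≤ (n : ℝ) :=
      tendsto_natCast_atTop_atTop.eventually_ge_atTop _
    filter_upwards [hu.eventually_const_lt hc, hlarge, eventually_gt_atTop 0,
      hk.eventually_gt_atTop 0] with n hn hnl hn0 hκ0
    refine hn.trans_le ?_
    simp only [Function.comp_apply]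
    set κ := n / Q with hκ
    have hn0' : 0 < (n : ℝ) := by exact_mod_cast hn0
    have hκ0' : 0 < (κ : ℝ) := by exact_mod_cast hκ0
    rw [div_pow, div_mul_div_cancel₀ (by positivity)]
    unfold ratio
    have hQκ : Q * κ ≤ n ∧ n ≤ Q * κ + Q := by
      have h1 := Nat.div_add_mod n Q
      have h2 := Nat.mod_lt n hQ0
      rw [← hκ] at h1
      omega
    have hle : h (Q * κ) (P * κ) ≤ h n ⌊y * (n : ℝ)⌋₊ := by
      have h1 := hshift (n - Q * κ) (Q * κ) (P * κ)
      rw [Nat.add_sub_cancel' hQκ.1] at h1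
      refine h1.trans (hmono _ ?_)
      have h2 : D * (n - Q * κ) ≤ D * Q := Nat.mul_le_mul_left _ (by omega)
      refine (Nat.add_le_add_left h2 _).trans (Nat.le_floor ?_)
      have h4 : (Q : ℝ) * κ ≤ n := by exact_mod_cast hQκ.1
      rw [div_le_iff₀ (by linarith)] at hnl
      have h5 : (P : ℝ) * κ ≤ r * n := by
        rw [hPQ, mul_assoc]
        exact mul_le_mul_of_nonneg_left h4 (by exact_mod_cast hr0.le)
      push_cast
      linarith
    gcongr

/-- The density function attached to `h`, with a constant factor `A`. -/
noncomputable def density (h : ℕ → ℕ → ℕ) (e : ℕ) (A : ℝ) (x : ℝ) : ℝ :=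
  limsup (fun n => A * ratio h e n x) atTop

variable {A : ℝ}

lemma eventually_ratio_le (hA : 0 ≤ A) (hb : ∀ n m, (h n m : ℝ) ≤ C * ((m : ℝ) + 1) ^ e)
    {x c : ℝ} (hc : 0 ≤ c) (hxc : x ≤ c) :
    ∀ᶠ n in atTop, A * ratio h e n x ≤ A * (C * (c + 1) ^ e) := by
  filter_upwards [eventually_gt_atTop 0] with n hn
  exact mul_le_mul_of_nonneg_left (ratio_le hb hn hc hxc) hA

lemma isBoundedUnder_ratio (hA : 0 ≤ A) (hb : ∀ n m, (h n m : ℝ) ≤ C * ((m : ℝ) + 1) ^ e)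
    (x : ℝ) : IsBoundedUnder (· ≤ ·) atTop (fun n => A * ratio h e n x) :=
  ⟨_, eventually_map.2 (eventually_ratio_le hA hb (abs_nonneg x) (le_abs_self x))⟩

lemma isCoboundedUnder_ratio (hA : 0 ≤ A) (x : ℝ) :
    IsCoboundedUnder (· ≤ ·) atTop (fun n => A * ratio h e n x) :=
  IsBoundedUnder.isCoboundedUnder_le
    ⟨0, eventually_map.2 (Eventually.of_forall fun n => mul_nonneg hA (ratio_nonneg n x))⟩

lemma density_monotone (hA : 0 ≤ A) (hm : ∀ n m, h n m ≤ h n (m + 1))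
    (hb : ∀ n m, (h n m : ℝ) ≤ C * ((m : ℝ) + 1) ^ e) : Monotone (density h e A) := by
  intro x y hxy
  exact limsup_le_limsup
    (Eventually.of_forall fun n => mul_le_mul_of_nonneg_left (ratio_mono hm n hxy) hA)
    (isCoboundedUnder_ratio hA x) (isBoundedUnder_ratio hA hb y)

/-- The density function is a limit, not only a limit superior, at each of its continuity
points in `(0, ∞)`. -/
lemma tendsto_density (hA : 0 < A) (hm : ∀ n m, h n m ≤ h n (m + 1))
    (hs : ∀ n m, h n m ≤ h (n + 1) (m + D))
    (hb : ∀ n m, (h n m : ℝ) ≤ C * ((m : ℝ) + 1) ^ e)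
    (hp : ∀ p q : ℕ, ∃ E : ℕ, 0 < E ∧ ∃ P : ℚ[X], ∀ᶠ n : ℕ in atTop,
      (h (q * (E * n)) (p * (E * n)) : ℚ) = P.eval (n : ℚ))
    {x : ℝ} (hx : 0 < x) (hcont : ContinuousAt (density h e A) x) :
    Tendsto (fun n => A * ratio h e n x) atTop (nhds (density h e A x)) := by
  rw [tendsto_order]
  refine ⟨fun c hc => ?_, fun c hc => eventually_lt_of_limsup_lt hc
    (isBoundedUnder_ratio hA.le hb x)⟩
  -- a point `x' < x` at which the density still exceeds `c`
  have hev : ∀ᶠ x' in nhdsWithin x (Set.Iio x), c < density h e A x' :=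
    nhdsWithin_le_nhds (hcont.eventually_const_lt hc)
  have hev' : ∀ᶠ x' in nhdsWithin x (Set.Iio x), 0 < x' :=
    nhdsWithin_le_nhds (eventually_gt_nhds hx)
  obtain ⟨x', ⟨hx'c, hx'0⟩, hx'x⟩ := ((hev.and hev').and self_mem_nhdsWithin).exists
  obtain ⟨L, hL1, hL2⟩ := exists_separating hm hs hb hp hx'0.le (show x' < x from hx'x)
  have hAL : density h e A x' ≤ A * L := by
    refine le_of_forall_gt_imp_ge_of_dense fun b hb' => ?_
    refine limsup_le_of_le (isCoboundedUnder_ratio hA.le x') ?_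
    filter_upwards [hL1 (b / A) (by rwa [lt_div_iff₀ hA, mul_comm])] with n hn
    rw [lt_div_iff₀ hA] at hn
    linarith
  filter_upwards [hL2 (c / A) (by rw [div_lt_iff₀ hA]; linarith)] with n hn
  rw [div_lt_iff₀ hA] at hn
  linarith

lemma ae_tendsto_density (hA : 0 < A) (hm : ∀ n m, h n m ≤ h n (m + 1))
    (hs : ∀ n m, h n m ≤ h (n + 1) (m + D))
    (hb : ∀ n m, (h n m : ℝ) ≤ C * ((m : ℝ) + 1) ^ e)
    (hp : ∀ p q : ℕ, ∃ E : ℕ, 0 < E ∧ ∃ P : ℚ[X], ∀ᶠ n : ℕ in atTop,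
      (h (q * (E * n)) (p * (E * n)) : ℚ) = P.eval (n : ℚ)) :
    ∀ᵐ x ∂(volume.restrict (Set.Ioi (0 : ℝ))),
      Tendsto (fun n => A * ratio h e n x) atTop (nhds (density h e A x)) := by
  have hcount := (density_monotone (h := h) hA.le hm hb).countable_not_continuousAt
  rw [ae_restrict_iff' measurableSet_Ioi]
  filter_upwards [hcount.ae_notMem volume] with x hx hx0
  exact tendsto_density hA hm hs hb hp hx0 (not_not.1 hx)

end Density

/-! ### The integral of the difference of two densities -/

section Integral

variable {h h' : ℕ → ℕ → ℕ} {e D D' c : ℕ} {A C C' : ℝ}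

lemma floor_eq_of_mem_Ioo {n m : ℕ} (hn : 0 < n) {x : ℝ}
    (hx : x ∈ Set.Ioo ((m : ℝ) / n) (((m + 1 : ℕ) : ℝ) / n)) : ⌊x * (n : ℝ)⌋₊ = m := by
  have hn' : (0 : ℝ) < n := by exact_mod_cast hn
  obtain ⟨h1, h2⟩ := hx
  rw [div_lt_iff₀ hn'] at h1
  rw [lt_div_iff₀ hn'] at h2
  rw [Nat.floor_eq_iff (le_trans (Nat.cast_nonneg m) h1.le)]
  exact ⟨h1.le, by exact_mod_cast h2⟩

lemma ratio_eq_of_le (hc : ∀ n m, 0 < n → c * n ≤ m → h n m = h' n m) {n : ℕ} (hn : 0 < n)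
    {x : ℝ} (hx : (c : ℝ) ≤ x) : ratio h e n x = ratio h' e n x := by
  unfold ratio
  rw [hc n _ hn (Nat.le_floor (by push_cast; gcongr))]

/-- The normalised length functions are step functions, with integral a Riemann sum. -/
lemma integral_ratio_sub (hm : ∀ n m, h n m ≤ h n (m + 1)) (hm' : ∀ n m, h' n m ≤ h' n (m + 1))
    (hc : ∀ n m, 0 < n → c * n ≤ m → h n m = h' n m) {n : ℕ} (hn : 0 < n) :
    ∫ x in Set.Ioi (0 : ℝ), (A * ratio h' e n x - A * ratio h e n x) =
      A * (∑ m ∈ Finset.range (c * n), ((h' n m : ℝ) - h n m)) / (n : ℝ) ^ (e + 1) := by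
  have hn' : (0 : ℝ) < n := by exact_mod_cast hn
  set g : ℝ → ℝ := fun x => A * ratio h' e n x - A * ratio h e n x with hg
  have hgint : ∀ a b : ℝ, IntervalIntegrable g volume a b := fun a b =>
    ((ratio_mono hm' n).intervalIntegrable.const_mul A).sub
      ((ratio_mono hm n).intervalIntegrable.const_mul A)
  have h1 : ∫ x in Set.Ioi (0 : ℝ), g x = ∫ x in (0 : ℝ)..c, g x := by
    rw [intervalIntegral.integral_of_le (Nat.cast_nonneg c)]
    refine setIntegral_eq_of_subset_of_forall_sdiff_eq_zero measurableSet_Ioi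
      (fun x hx => hx.1) fun x hx => ?_
    have hxc : (c : ℝ) ≤ x := by
      by_contra hlt
      exact hx.2 ⟨hx.1, (not_le.1 hlt).le⟩
    simp only [hg, ratio_eq_of_le (e := e) hc hn hxc, sub_self]
  have h2 := intervalIntegral.sum_integral_adjacent_intervals (μ := volume) (f := g)
    (a := fun m : ℕ => (m : ℝ) / n) (n := c * n) fun m _ => hgint _ _
  have h3 : ((c * n : ℕ) : ℝ) / n = c := by push_cast; field_simp
  rw [h3, Nat.cast_zero, zero_div] at h2
  rw [h1, ← h2, mul_div_assoc, Finset.sum_div, Finset.mul_sum]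
  refine Finset.sum_congr rfl fun m _ => ?_
  rw [intervalIntegral.integral_of_le (by gcongr; simp), integral_Ioc_eq_integral_Ioo,
    setIntegral_congr_fun (g := fun _ => A * ((h' n m : ℝ) - h n m) / (n : ℝ) ^ e)
      measurableSet_Ioo (fun x hx => ?_)]
  · rw [setIntegral_const, Measure.real, Real.volume_Ioo, smul_eq_mul,
      ENNReal.toReal_ofReal (by rw [sub_nonneg]; gcongr; simp)]
    push_cast
    field_simp
    ring
  · simp only [hg, ratio, floor_eq_of_mem_Ioo hn hx]
    ring

/-- Dominated convergence for the normalised length functions. -/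
lemma tendsto_sum_density (hA : 0 < A)
    (hm : ∀ n m, h n m ≤ h n (m + 1)) (hs : ∀ n m, h n m ≤ h (n + 1) (m + D))
    (hb : ∀ n m, (h n m : ℝ) ≤ C * ((m : ℝ) + 1) ^ e)
    (hp : ∀ p q : ℕ, ∃ E : ℕ, 0 < E ∧ ∃ P : ℚ[X], ∀ᶠ n : ℕ in atTop,
      (h (q * (E * n)) (p * (E * n)) : ℚ) = P.eval (n : ℚ))
    (hm' : ∀ n m, h' n m ≤ h' n (m + 1)) (hs' : ∀ n m, h' n m ≤ h' (n + 1) (m + D'))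
    (hb' : ∀ n m, (h' n m : ℝ) ≤ C' * ((m : ℝ) + 1) ^ e)
    (hp' : ∀ p q : ℕ, ∃ E : ℕ, 0 < E ∧ ∃ P : ℚ[X], ∀ᶠ n : ℕ in atTop,
      (h' (q * (E * n)) (p * (E * n)) : ℚ) = P.eval (n : ℚ))
    (hc : ∀ n m, 0 < n → c * n ≤ m → h n m = h' n m) :
    Tendsto (fun n : ℕ => A * (∑ m ∈ Finset.range (c * n), ((h' n m : ℝ) - h n m)) /
      (n : ℝ) ^ (e + 1)) atTop
      (nhds (∫ x in Set.Ioi (0 : ℝ), (density h' e A x - density h e A x))) := by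
  set B : ℝ := A * (C' * (c + 1) ^ e) + A * (C * (c + 1) ^ e) with hB
  have hlim := tendsto_integral_filter_of_dominated_convergence (l := atTop)
    (μ := volume.restrict (Set.Ioi (0 : ℝ)))
    (F := fun n x => A * ratio h' e n x - A * ratio h e n x)
    (f := fun x => density h' e A x - density h e A x)
    (Set.indicator (Set.Icc (0 : ℝ) c) fun _ => B) ?_ ?_ ?_ ?_
  · refine hlim.congr' ?_
    filter_upwards [eventually_gt_atTop 0] with n hn
    exact integral_ratio_sub hm hm' hc hn
  · refine Eventually.of_forall fun n => Measurable.aestronglyMeasurable ?_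
    exact ((ratio_mono hm' n).measurable.const_mul A).sub
      ((ratio_mono hm n).measurable.const_mul A)
  · filter_upwards [eventually_gt_atTop 0] with n hn
    rw [ae_restrict_iff' measurableSet_Ioi]
    refine Eventually.of_forall fun x hx => ?_
    rcases le_total x c with hxc | hxc
    · rw [Set.indicator_of_mem (Set.mem_Icc.2 ⟨le_of_lt hx, hxc⟩), Real.norm_eq_abs]
      have h1 := mul_le_mul_of_nonneg_left (ratio_le hb hn (Nat.cast_nonneg c) hxc) hA.le
      have h2 := mul_le_mul_of_nonneg_left (ratio_le hb' hn (Nat.cast_nonneg c) hxc) hA.le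
      have h3 := mul_nonneg hA.le (ratio_nonneg (h := h) (e := e) n x)
      have h4 := mul_nonneg hA.le (ratio_nonneg (h := h') (e := e) n x)
      rw [abs_le]
      constructor <;> linarith
    · rw [ratio_eq_of_le hc hn hxc, sub_self, norm_zero]
      refine Set.indicator_nonneg (fun _ _ => ?_) x
      have h1 := mul_le_mul_of_nonneg_left (ratio_le hb hn (Nat.cast_nonneg c) le_rfl) hA.le
      have h2 := mul_le_mul_of_nonneg_left (ratio_le hb' hn (Nat.cast_nonneg c) le_rfl) hA.le
      have h3 := mul_nonneg hA.le (ratio_nonneg (h := h) (e := e) n (c : ℝ))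
      have h4 := mul_nonneg hA.le (ratio_nonneg (h := h') (e := e) n (c : ℝ))
      linarith
  · refine Integrable.mono_measure ?_ Measure.restrict_le_self
    rw [integrable_indicator_iff measurableSet_Icc]
    exact integrableOn_const (by simp)
  · filter_upwards [ae_tendsto_density hA hm hs hb hp, ae_tendsto_density hA hm' hs' hb' hp']
      with x hx hx'
    exact hx'.sub hx

end Integral

/-! ### Growth of the Hilbert function -/

/-- The Krull dimension of a subring is at most that of an integral extension which is a domain, by
going up. -/
lemma ringKrullDim_le_of_isIntegral (P R : Type*) [CommRing P] [CommRing R] [IsDomain R]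
    [Algebra P R] [Algebra.IsIntegral P R] (hinj : Function.Injective (algebraMap P R)) :
    ringKrullDim P ≤ ringKrullDim R := by
  refine iSup_le fun l => ?_
  have hbot : (⊥ : Ideal R).comap (algebraMap P R) ≤ l.head.asIdeal := by
    intro y hy
    have h0 : algebraMap P R y = 0 := hy
    rw [(injective_iff_map_eq_zero _).1 hinj y h0]
    exact Ideal.zero_mem _
  obtain ⟨Q, -, hQ, hQl⟩ :=
    Ideal.exists_ideal_over_prime_of_isIntegral l.head.asIdeal (⊥ : Ideal R) hbot
  have : Q.LiesOver (RelSeries.head l).asIdeal := ⟨hQl.symm⟩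
  obtain ⟨L, hL, -⟩ := Ideal.exists_ltSeries_of_hasGoingUp l Q
  rw [← hL]
  exact Order.LTSeries.length_le_krullDim L

section Growth

variable {k P R : Type*} [Field k] [CommRing R] [Algebra k R] {s B : ℕ}

/-- The elements `∑ₗ g(cₗ) bₗ` where every `cₗ` has degree at most `N` in each variable. -/
def degSpan (g : MvPolynomial (Fin s) k →ₐ[k] R) (b : Fin B → R) (N : ℕ) : Submodule k R :=
  Submodule.span k (Set.range fun al : (Fin s → Fin (N + 1)) × Fin B =>
    g (MvPolynomial.monomial (Finsupp.equivFunOnFinite.symm fun i => (al.1 i : ℕ)) 1) * b al.2)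

variable (g : MvPolynomial (Fin s) k →ₐ[k] R) (b : Fin B → R)

lemma finrank_degSpan_le (N : ℕ) : Module.finrank k (degSpan g b N) ≤ (N + 1) ^ s * B := by
  refine (finrank_range_le_card _).trans ?_
  simp

lemma mul_mem_degSpan {N : ℕ} {c : MvPolynomial (Fin s) k} (hc : ∀ i, c.degreeOf i ≤ N)
    (l : Fin B) : g c * b l ∈ degSpan g b N := by
  rw [c.as_sum, map_sum, Finset.sum_mul]
  refine Submodule.sum_mem _ fun m hm => ?_
  rw [show MvPolynomial.monomial m (c.coeff m) = c.coeff m • MvPolynomial.monomial m (1 : k) by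
    rw [MvPolynomial.smul_monomial, smul_eq_mul, mul_one], map_smul, smul_mul_assoc]
  refine Submodule.smul_mem _ _ (Submodule.subset_span
    ⟨(fun i => ⟨m i, Nat.lt_succ_of_le ((MvPolynomial.monomial_le_degreeOf i hm).trans (hc i))⟩,
      l), ?_⟩)
  have : (Finsupp.equivFunOnFinite.symm fun i => m i) = m := by ext; simp
  simp [this]

lemma sum_mem_degSpan {N : ℕ} {c : Fin B → MvPolynomial (Fin s) k}
    (hc : ∀ l i, (c l).degreeOf i ≤ N) : ∑ l, g (c l) * b l ∈ degSpan g b N :=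
  Submodule.sum_mem _ fun l _ => mul_mem_degSpan g b (hc l) l

lemma degSpan_mono {N N' : ℕ} (h : N ≤ N') : degSpan g b N ≤ degSpan g b N' := by
  unfold degSpan
  rw [Submodule.span_le]
  rintro _ ⟨⟨a, l⟩, rfl⟩
  refine mul_mem_degSpan g b (fun i => ?_) l
  rw [MvPolynomial.degreeOf_monomial_eq _ _ one_ne_zero]
  have := (a i).2
  simp only [Finsupp.equivFunOnFinite_symm_apply_apply]
  omega

lemma mul_degSpan {C N : ℕ} {y : R} (c : Fin B → Fin B → MvPolynomial (Fin s) k)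
    (hc : ∀ j l i, (c j l).degreeOf i ≤ C) (hy : ∀ j, y * b j = ∑ l, g (c j l) * b l) {z : R}
    (hz : z ∈ degSpan g b N) : y * z ∈ degSpan g b (N + C) := by
  have : degSpan g b N ≤ (degSpan g b (N + C)).comap (LinearMap.mulLeft k y) := by
    conv_lhs => unfold degSpan
    rw [Submodule.span_le]
    rintro _ ⟨⟨a, j⟩, rfl⟩
    simp only [SetLike.mem_coe, Submodule.mem_comap, LinearMap.mulLeft_apply]
    rw [mul_left_comm, hy, Finset.mul_sum]
    simp only [← mul_assoc, ← map_mul]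
    refine sum_mem_degSpan g b fun l i => (MvPolynomial.degreeOf_mul_le _ _ _).trans ?_
    refine add_le_add ?_ (hc j l i)
    rw [MvPolynomial.degreeOf_monomial_eq _ _ one_ne_zero]
    have := (a i).2
    simp only [Finsupp.equivFunOnFinite_symm_apply_apply]
    omega
  exact this hz

end Growth

section Graded

variable {k R : Type*} [Field k] [CommRing R] [Algebra k R] {𝒜 : ℕ → Submodule k R}

lemma finite_graded (hSG : IsStandardGraded k 𝒜) (m : ℕ) : Module.Finite k (𝒜 m) := by
  rw [Module.Finite.iff_fg]
  induction m with
  | zero => rw [hSG.1]; exact Submodule.fg_span_singleton _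
  | succ m ih => rw [hSG.2.1]; exact hSG.2.2.mul ih

lemma finite_idealComp (hSG : IsStandardGraded k 𝒜) (I : Ideal R) (m : ℕ) :
    Module.Finite k (idealComp k 𝒜 I m) := by
  have := finite_graded hSG m
  exact Submodule.finiteDimensional_of_le (inf_le_right : idealComp k 𝒜 I m ≤ 𝒜 m)

lemma compLen_le (hSG : IsStandardGraded k 𝒜) (I : Ideal R) (m : ℕ) :
    compLen k 𝒜 I m ≤ Module.finrank k (𝒜 m) := by
  have := finite_graded hSG m
  exact Submodule.finrank_mono inf_le_right

variable [GradedAlgebra 𝒜]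

/-- Multiplication by a nonzero homogeneous element `y` with `y I ⊆ I'` embeds the graded components
of `I` into those of `I'`. -/
lemma compLen_le_of_mul [IsDomain R] (hSG : IsStandardGraded k 𝒜) {I I' : Ideal R} {y : R}
    {j : ℕ} (hy : y ∈ 𝒜 j) (hy0 : y ≠ 0) (h : ∀ z ∈ I, y * z ∈ I') (m : ℕ) :
    compLen k 𝒜 I m ≤ compLen k 𝒜 I' (m + j) := by
  have := finite_idealComp hSG I' (m + j)
  let φ : idealComp k 𝒜 I m →ₗ[k] idealComp k 𝒜 I' (m + j) :=
    (LinearMap.mulLeft k y).restrict fun z hz =>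
      ⟨h z hz.1, by
        have := SetLike.mul_mem_graded hy hz.2
        rwa [add_comm] at this⟩
  refine LinearMap.finrank_le_finrank_of_injective (f := φ) ?_
  intro z w hzw
  have := congrArg Subtype.val hzw
  exact Subtype.ext (mul_left_cancel₀ hy0 this)

lemma exists_deg_one_ne_zero (hSG : IsStandardGraded k 𝒜) (hdim : 0 < ringKrullDim R) :
    ∃ y ∈ 𝒜 1, y ≠ 0 := by
  by_contra! hcon
  have h1 : 𝒜 1 = ⊥ := (Submodule.eq_bot_iff _).2 hcon
  have h2 : ∀ m, 𝒜 (m + 1) = ⊥ := fun m => by rw [hSG.2.1, h1, Submodule.bot_mul]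
  have hsurj : Function.Surjective (algebraMap k R) := by
    intro y
    have hy : y ∈ 𝒜 0 := by
      classical
      rw [← DirectSum.sum_support_decompose 𝒜 y]
      refine Submodule.sum_mem _ fun i _ => ?_
      match i with
      | 0 => exact SetLike.coe_mem _
      | i + 1 =>
        have h3 : ∀ z ∈ 𝒜 (i + 1), z = 0 := (Submodule.eq_bot_iff _).1 (h2 i)
        rw [h3 _ (SetLike.coe_mem _)]
        exact Submodule.zero_mem _
    rw [hSG.1, Submodule.mem_span_singleton] at hy
    obtain ⟨a, rfl⟩ := hy
    exact ⟨a, Algebra.algebraMap_eq_smul_one a⟩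
  have := ringKrullDim_le_of_surjective _ hsurj
  rw [ringKrullDim_eq_zero_of_field] at this
  exact absurd hdim (not_lt.2 this)

lemma compLen_mono [IsDomain R] (hSG : IsStandardGraded k 𝒜) (hdim : 0 < ringKrullDim R)
    (I : Ideal R) (m : ℕ) : compLen k 𝒜 I m ≤ compLen k 𝒜 I (m + 1) := by
  obtain ⟨y, hy, hy0⟩ := exists_deg_one_ne_zero hSG hdim
  exact compLen_le_of_mul hSG hy hy0 (fun z hz => Ideal.mul_mem_left _ _ hz) m

lemma exists_compLen_shift [IsDomain R] (hSG : IsStandardGraded k 𝒜) {I : Ideal R}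
    (hI : I.IsHomogeneous 𝒜) (hI0 : I ≠ ⊥) :
    ∃ D, ∀ n m, compLen k 𝒜 (I ^ n) m ≤ compLen k 𝒜 (I ^ (n + 1)) (m + D) := by
  obtain ⟨y, hyI, hy0⟩ := Submodule.exists_mem_ne_zero_of_ne_bot hI0
  obtain ⟨D, hD⟩ : ∃ D, (DirectSum.decompose 𝒜 y D : R) ≠ 0 := by
    by_contra! hcon
    classical
    apply hy0
    rw [← DirectSum.sum_support_decompose 𝒜 y]
    exact Finset.sum_eq_zero fun i _ => hcon i
  refine ⟨D, fun n m => compLen_le_of_mul hSG (SetLike.coe_mem _) hD (fun z hz => ?_) m⟩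
  rw [pow_succ']
  exact Ideal.mul_mem_mul (hI D hyI) hz

lemma finiteType_of_isStandardGraded (hSG : IsStandardGraded k 𝒜) : Algebra.FiniteType k R := by
  obtain ⟨S, hS⟩ := hSG.2.2
  refine ⟨⟨S, ?_⟩⟩
  have hle : ∀ m, 𝒜 m ≤ Subalgebra.toSubmodule (Algebra.adjoin k (S : Set R)) := by
    intro m
    induction m with
    | zero =>
      rw [hSG.1, Submodule.span_le]
      rintro _ rfl
      exact one_mem (Algebra.adjoin k (S : Set R))
    | succ m ih =>
      rw [hSG.2.1, Submodule.mul_le]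
      intro y hy z hz
      have hy' : y ∈ Algebra.adjoin k (S : Set R) := by
        rw [← hS] at hy
        exact Algebra.span_le_adjoin k (S : Set R) hy
      exact Subalgebra.mul_mem (Algebra.adjoin k (S : Set R)) hy' (ih hz)
  rw [eq_top_iff]
  intro y _
  classical
  rw [← DirectSum.sum_support_decompose 𝒜 y]
  exact sum_mem fun i _ => hle i (SetLike.coe_mem _)

/-- The sum of the dimensions of the components of degree less than `m` is bounded by the dimension
of any subspace containing these components. -/
lemma sum_finrank_le (hSG : IsStandardGraded k 𝒜) {W : Submodule k R} [Module.Finite k W] {m : ℕ}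
    (hW : ∀ j < m, 𝒜 j ≤ W) : ∑ j ∈ Finset.range m, Module.finrank k (𝒜 j) ≤
      Module.finrank k W := by
  have := finite_graded hSG
  let φ : (∀ j : Fin m, 𝒜 j) →ₗ[k] W :=
    ∑ j : Fin m, (Submodule.inclusion (hW j j.2)).comp (LinearMap.proj j)
  have hφ : ∀ v, (φ v : R) = ∑ j : Fin m, (v j : R) := by
    intro v
    simp [φ]
  have hinj : Function.Injective φ := by
    rw [injective_iff_map_eq_zero]
    intro v hv
    have h0 : ∑ j : Fin m, (v j : R) = 0 := by rw [← hφ, hv]; rfl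
    funext i
    have h1 := congrArg (fun y => (DirectSum.decompose 𝒜 y (i : ℕ) : R)) h0
    beta_reduce at h1
    rw [DirectSum.decompose_sum, DFinsupp.finsetSum_apply, AddSubmonoidClass.coe_finsetSum,
      DirectSum.decompose_zero, DirectSum.zero_apply, ZeroMemClass.coe_zero,
      Finset.sum_eq_single i] at h1
    · rw [DirectSum.decompose_of_mem_same 𝒜 (v i).2] at h1
      exact Subtype.ext h1
    · intro j _ hji
      exact DirectSum.decompose_of_mem_ne 𝒜 (v j).2 fun h => hji (Fin.ext h)
    · simp
  have := LinearMap.finrank_le_finrank_of_injective hinj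
  rwa [Module.finrank_pi_fintype, Fin.sum_univ_eq_sum_range (fun j => Module.finrank k (𝒜 j)) m]
    at this

/-- The Hilbert function of a graded domain of dimension `d` is `O(m^(d-1))`. A Noether
normalization shows that its partial sums are `O(m^d)`; as the Hilbert function is
nondecreasing, this gives the bound. -/
lemma exists_finrank_graded_le [IsDomain R] (hSG : IsStandardGraded k 𝒜)
    {e : ℕ} (hdim : ringKrullDim R = ((e + 1 : ℕ) : WithBot ℕ∞)) :
    ∃ C : ℝ, ∀ m, (Module.finrank k (𝒜 m) : ℝ) ≤ C * ((m : ℝ) + 1) ^ e := by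
  have := finiteType_of_isStandardGraded hSG
  obtain ⟨s, g, hginj, hgfin⟩ := exists_finite_inj_algHom_of_fg k R
  let := g.toRingHom.toAlgebra
  have : Module.Finite (MvPolynomial (Fin s) k) R := hgfin
  have hs : s ≤ e + 1 := by
    have h1 := ringKrullDim_le_of_isIntegral (MvPolynomial (Fin s) k) R hginj
    rw [MvPolynomial.ringKrullDim_of_isNoetherianRing, ringKrullDim_eq_zero_of_field, zero_add,
      hdim, Nat.card_eq_fintype_card, Fintype.card_fin] at h1
    exact_mod_cast h1
  obtain ⟨B, b, hb⟩ := Module.Finite.exists_fin (R := MvPolynomial (Fin s) k) (M := R)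
  have hrep : ∀ y : R, ∃ c : Fin B → MvPolynomial (Fin s) k, ∑ l, g (c l) * b l = y := by
    intro y
    have hy : y ∈ Submodule.span (MvPolynomial (Fin s) k) (Set.range b) := hb ▸ Submodule.mem_top
    obtain ⟨c, hc⟩ := (Submodule.mem_span_range_iff_exists_fun _).1 hy
    exact ⟨c, by rw [← hc]; rfl⟩
  obtain ⟨r, x, hx⟩ := exists_deg_one_gens hSG
  obtain ⟨c₀, hc₀⟩ := hrep 1
  choose c hc using fun (i : Fin r) (j : Fin B) => hrep (x i * b j)
  -- a common bound for the degrees of all the coefficients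
  obtain ⟨N, hN₀, hN⟩ : ∃ N : ℕ, (∀ l i, (c₀ l).degreeOf i ≤ N) ∧
      ∀ a j l i, (c a j l).degreeOf i ≤ N := by
    refine ⟨(∑ l, ∑ i, (c₀ l).degreeOf i) + ∑ a, ∑ j, ∑ l, ∑ i, (c a j l).degreeOf i,
      fun l i => ?_, fun a j l i => ?_⟩
    · refine le_trans ?_ (Nat.le_add_right _ _)
      exact (Finset.single_le_sum (f := fun i => (c₀ l).degreeOf i) (fun _ _ => Nat.zero_le _)
        (Finset.mem_univ i)).trans (Finset.single_le_sum
          (f := fun l => ∑ i, (c₀ l).degreeOf i) (fun _ _ => Nat.zero_le _) (Finset.mem_univ l))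
    · refine le_trans ?_ (Nat.le_add_left _ _)
      exact (((Finset.single_le_sum (f := fun i => (c a j l).degreeOf i)
        (fun _ _ => Nat.zero_le _) (Finset.mem_univ i)).trans (Finset.single_le_sum
          (f := fun l => ∑ i, (c a j l).degreeOf i) (fun _ _ => Nat.zero_le _)
          (Finset.mem_univ l))).trans (Finset.single_le_sum
          (f := fun j => ∑ l, ∑ i, (c a j l).degreeOf i) (fun _ _ => Nat.zero_le _)
          (Finset.mem_univ j))).trans (Finset.single_le_sum
          (f := fun a => ∑ j, ∑ l, ∑ i, (c a j l).degreeOf i) (fun _ _ => Nat.zero_le _)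
          (Finset.mem_univ a))
  have hle : ∀ m, 𝒜 m ≤ degSpan g b (N * (m + 1)) := by
    intro m
    induction m with
    | zero =>
      rw [hSG.1, Submodule.span_le]
      rintro _ rfl
      rw [zero_add, mul_one, SetLike.mem_coe]
      have := sum_mem_degSpan g b hN₀
      rwa [hc₀] at this
    | succ m ih =>
      rw [hSG.2.1, Submodule.mul_le]
      intro y hy z hz
      rw [hx] at hy
      have : Submodule.span k (Set.range x) ≤
          (degSpan g b (N * (m + 1 + 1))).comap (LinearMap.mulRight k z) := by
        rw [Submodule.span_le]
        rintro _ ⟨a, rfl⟩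
        exact mul_degSpan g b (c a) (hN a) (fun j => (hc a j).symm) (ih hz)
      exact this hy
  have hmono : Monotone fun m => Module.finrank k (𝒜 m) := by
    refine monotone_nat_of_le_succ fun m => ?_
    have := compLen_mono hSG (by rw [hdim]; exact_mod_cast Nat.succ_pos e) (⊤ : Ideal R) m
    have htop : ∀ m, idealComp k 𝒜 (⊤ : Ideal R) m = 𝒜 m :=
      fun m => inf_eq_right.2 fun _ _ => trivial
    unfold compLen at this
    rwa [htop, htop] at this
  -- the components of degrees `m, …, 2m` contribute at least `m + 1` times the `m`-th dimension
  have hpartial : ∀ m, (m + 1) * Module.finrank k (𝒜 m) ≤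
      (N * (2 * m + 1) + 1) ^ (e + 1) * B := by
    intro m
    have : Module.Finite k (degSpan g b (N * (2 * m + 1))) :=
      Module.Finite.span_of_finite k (Set.finite_range _)
    have h1 := sum_finrank_le hSG (W := degSpan g b (N * (2 * m + 1))) (m := 2 * m + 1)
      fun j hj => (hle j).trans (degSpan_mono g b (by gcongr; omega))
    have h2 : (m + 1) * Module.finrank k (𝒜 m) ≤
        ∑ j ∈ Finset.range (2 * m + 1), Module.finrank k (𝒜 j) := by
      calc (m + 1) * Module.finrank k (𝒜 m)
          = ∑ _j ∈ Finset.Ico m (2 * m + 1), Module.finrank k (𝒜 m) := by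
            rw [Finset.sum_const, Nat.card_Ico, smul_eq_mul]; congr 1; omega
        _ ≤ ∑ j ∈ Finset.Ico m (2 * m + 1), Module.finrank k (𝒜 j) :=
            Finset.sum_le_sum fun j hj => hmono (Finset.mem_Ico.1 hj).1
        _ ≤ _ := Finset.sum_le_sum_of_subset fun j hj =>
            Finset.mem_range.2 (Finset.mem_Ico.1 hj).2
    refine h2.trans (h1.trans ((finrank_degSpan_le g b _).trans ?_))
    gcongr
    omega
  refine ⟨(2 * N + 1) ^ (e + 1) * B, fun m => ?_⟩
  have h1 : ((m : ℝ) + 1) * Module.finrank k (𝒜 m) ≤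
      ((N : ℝ) * (2 * m + 1) + 1) ^ (e + 1) * B := by exact_mod_cast hpartial m
  have h2 : ((N : ℝ) * (2 * m + 1) + 1) ≤ (2 * N + 1) * (m + 1) := by
    have : (0 : ℝ) ≤ N := Nat.cast_nonneg _
    have : (0 : ℝ) ≤ m := Nat.cast_nonneg _
    nlinarith
  have h3 : ((m : ℝ) + 1) * Module.finrank k (𝒜 m) ≤
      ((m : ℝ) + 1) * ((2 * N + 1) ^ (e + 1) * B * ((m : ℝ) + 1) ^ e) := by
    calc _ ≤ _ := h1
      _ ≤ ((2 * N + 1) * ((m : ℝ) + 1)) ^ (e + 1) * B := by gcongr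
      _ = _ := by rw [mul_pow]; ring
  exact le_of_mul_le_mul_left h3 (by positivity)

end Graded

/-! ### Finite colength: agreement of `Iⁿ` and `Jⁿ` in large degrees -/

lemma ne_bot_of_idealHeight_pos {R : Type*} [CommRing R] [IsDomain R] {I : Ideal R}
    (h : 0 < idealHeight I) : I ≠ ⊥ := by
  rintro rfl
  refine absurd h (not_lt.2 ?_)
  have h1 : idealHeight (⊥ : Ideal R) ≤ Order.height (⊥ : PrimeSpectrum R) :=
    iInf₂_le (⊥ : PrimeSpectrum R) bot_le
  rwa [Order.height_bot] at h1

section Colength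

variable {k R : Type*} [Field k] [CommRing R] [Algebra k R] {𝒜 : ℕ → Submodule k R}
  [GradedAlgebra 𝒜] {I J : Ideal R}

lemma decompose_eq_zero_of_mem_span {m i : ℕ} (him : i < m) {y : R}
    (hy : y ∈ Ideal.span (⋃ j ≥ m, (𝒜 j : Set R))) : (DirectSum.decompose 𝒜 y i : R) = 0 := by
  induction hy using Submodule.closure_induction with
  | zero => simp
  | add y z _ _ hy hz => rw [DirectSum.decompose_add, DirectSum.add_apply, Submodule.coe_add, hy,
      hz, add_zero]
  | smul_mem r y hy =>
    obtain ⟨j, hj, hy⟩ := Set.mem_iUnion₂.1 hy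
    rw [smul_eq_mul, mul_comm]
    exact DirectSum.coe_decompose_mul_of_left_mem_of_not_le 𝒜 hy (by omega)

/-- If `J / I` has finite length, then `I` and `J` agree in large degrees: the images in `J / I`
of the elements of order at least `m` form a descending chain, which stabilizes. -/
lemma exists_mem_of_finite_colength (hI : I.IsHomogeneous 𝒜)
    (hfin : IsFiniteLength R (↥J ⧸ Submodule.comap (Submodule.subtype J) I)) :
    ∃ m₀, ∀ m ≥ m₀, ∀ z ∈ J, z ∈ 𝒜 m → z ∈ I := by
  obtain ⟨-, hart⟩ := isFiniteLength_iff_isNoetherian_isArtinian.1 hfin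
  let G : ℕ → Ideal R := fun m => Ideal.span (⋃ j ≥ m, (𝒜 j : Set R))
  have hG : ∀ {a b}, a ≤ b → G b ≤ G a := fun h => Ideal.span_mono
    (Set.iUnion₂_subset fun j hj => Set.subset_iUnion₂_of_subset j (h.trans hj) le_rfl)
  let N : ℕ →o (Submodule R (↥J ⧸ Submodule.comap (Submodule.subtype J) I))ᵒᵈ :=
    ⟨fun m => OrderDual.toDual ((Submodule.comap J.subtype (G m)).map (Submodule.mkQ _)),
      fun a b h => OrderDual.toDual_le_toDual.2 (Submodule.map_mono (Submodule.comap_mono (hG h)))⟩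
  obtain ⟨m₀, hm₀⟩ := IsArtinian.monotone_stabilizes N
  refine ⟨m₀, fun m hm z hzJ hz => ?_⟩
  have hzG : z ∈ G m₀ := Ideal.subset_span (Set.mem_iUnion₂.2 ⟨m, hm, hz⟩)
  have h1 : Submodule.mkQ (Submodule.comap (Submodule.subtype J) I) ⟨z, hzJ⟩ ∈
      (Submodule.comap J.subtype (G m₀)).map (Submodule.mkQ _) := Submodule.mem_map_of_mem hzG
  have h2 : (Submodule.comap J.subtype (G m₀)).map (Submodule.mkQ _) =
      (Submodule.comap J.subtype (G (m + 1))).map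
        (Submodule.mkQ (Submodule.comap (Submodule.subtype J) I)) := hm₀ (m + 1) (by omega)
  rw [h2] at h1
  obtain ⟨w, hw, hwz⟩ := h1
  have h3 : z - w ∈ I := by
    have := (Submodule.Quotient.eq _).1 hwz.symm
    exact this
  have hw' : (w : R) ∈ G (m + 1) := hw
  have h4 := hI m h3
  rw [DirectSum.decompose_sub, DirectSum.sub_apply, Submodule.coe_sub,
    decompose_eq_zero_of_mem_span (Nat.lt_succ_self m) hw',
    DirectSum.decompose_of_mem_same 𝒜 hz, sub_zero] at h4
  exact h4

lemma graded_add_le (hSG : IsStandardGraded k 𝒜) (a b : ℕ) : 𝒜 (a + b) ≤ 𝒜 a * 𝒜 b := by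
  induction a with
  | zero =>
    rw [zero_add]
    intro y hy
    have := Submodule.mul_mem_mul (SetLike.GradedOne.one_mem : (1 : R) ∈ 𝒜 0) hy
    rwa [one_mul] at this
  | succ a ih =>
    rw [Nat.succ_add, hSG.2.1 (a + b), hSG.2.1 a, mul_assoc]
    exact mul_le_mul_right ih _

lemma graded_le_span_pow (hSG : IsStandardGraded k 𝒜) (m₀ j n : ℕ) {y : R}
    (hy : y ∈ 𝒜 (m₀ * n + j)) : y ∈ Ideal.span (𝒜 m₀ : Set R) ^ n := by
  induction n generalizing y with
  | zero => simp
  | succ n ih =>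
    rw [show m₀ * (n + 1) + j = m₀ + (m₀ * n + j) by ring] at hy
    rw [pow_succ']
    refine Submodule.mul_induction_on (graded_add_le hSG _ _ hy) (fun a ha b hb => ?_)
      fun a b ha hb => Ideal.add_mem _ ha hb
    exact Ideal.mul_mem_mul (Ideal.subset_span ha) (ih hb)

/-- If `J / I` has finite length, then `Iⁿ` and `Jⁿ` agree in all degrees `m ≥ cn`. A monomial of
degree `m ≥ cn` in the `n`-th power of `J` has a coefficient of degree at least `m₀ n`, which can
be distributed over the `n` generators of `J` so that each of them is pushed into `I`. -/
lemma exists_idealComp_pow_le [IsNoetherianRing R] (hSG : IsStandardGraded k 𝒜)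
    (hI : I.IsHomogeneous 𝒜) (hJ : J.IsHomogeneous 𝒜)
    (hfin : IsFiniteLength R (↥J ⧸ Submodule.comap (Submodule.subtype J) I)) :
    ∃ c, ∀ n m, c * n ≤ m → idealComp k 𝒜 (J ^ n) m ≤ idealComp k 𝒜 (I ^ n) m := by
  obtain ⟨m₀, hm₀⟩ := exists_mem_of_finite_colength hI hfin
  obtain ⟨r, x, hx⟩ := exists_deg_one_gens hSG
  obtain ⟨t, f, δ, hf, rfl⟩ := exists_homogeneous_gens 𝒜 hJ
  have hmul : Ideal.span (𝒜 m₀ : Set R) * Ideal.span (Set.range f) ≤ I := by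
    rw [Ideal.span_mul_span', Ideal.span_le]
    rintro _ ⟨y, hy, _, ⟨j, rfl⟩, rfl⟩
    exact hm₀ (m₀ + δ j) (Nat.le_add_right _ _) _
      (Ideal.mul_mem_left _ _ (Ideal.subset_span (Set.mem_range_self j)))
      (SetLike.mul_mem_graded hy (hf j))
  refine ⟨m₀ + ∑ j, δ j, fun n m hm => le_inf ?_ inf_le_right⟩
  rw [idealComp_pow_eq_monoSpan hSG hx hf, monoSpan, Submodule.span_le]
  rintro _ ⟨a, ⟨rfl, rfl⟩, rfl⟩
  have h1 : ∏ i, x i ^ a (Sum.inl i) ∈ 𝒜 (∑ i, a (Sum.inl i)) := by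
    have := prod_pow_mem_graded (𝒜 := 𝒜) (f := x) (δ := fun _ => 1)
      (fun i => hx ▸ Submodule.subset_span (Set.mem_range_self i)) (fun i => a (Sum.inl i))
    simpa using this
  have h2 : ∑ j, δ j * a (Sum.inr j) ≤ (∑ j, δ j) * wt₁ a := by
    rw [Finset.sum_mul]
    refine Finset.sum_le_sum fun j _ => Nat.mul_le_mul_left _ ?_
    exact Finset.single_le_sum (f := fun j => a (Sum.inr j)) (fun _ _ => Nat.zero_le _)
      (Finset.mem_univ j)
  have h3 : m₀ * wt₁ a ≤ ∑ i, a (Sum.inl i) := by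
    unfold wt₂ at hm
    rw [add_mul] at hm
    omega
  rw [← Nat.add_sub_cancel' h3] at h1
  have h4 := Ideal.mul_mem_mul (graded_le_span_pow hSG _ _ _ h1)
    (prod_pow_mem_pow (I := Ideal.span (Set.range f))
      (fun j => Ideal.subset_span (Set.mem_range_self j)) fun j => a (Sum.inr j))
  refine Ideal.pow_right_mono hmul (wt₁ a) ?_
  rw [mul_pow]
  exact h4

lemma finrank_quotient_comap_subtype {V : Type*} [AddCommGroup V] [Module k V]
    {X Y : Submodule k V} [Module.Finite k X] (h : Y ≤ X) :
    (Module.finrank k (X ⧸ Y.comap X.subtype) : ℝ) = Module.finrank k X - Module.finrank k Y := by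
  have h1 := Submodule.finrank_quotient_add_finrank (Y.comap X.subtype)
  rw [(Submodule.comapSubtypeEquivOfLe h).finrank_eq] at h1
  rw [← h1]
  push_cast
  ring

lemma isHomogeneous_pow (hI : I.IsHomogeneous 𝒜) (n : ℕ) : (I ^ n).IsHomogeneous 𝒜 := by
  induction n with
  | zero => rw [pow_zero, Ideal.one_eq_top]; exact Ideal.IsHomogeneous.top 𝒜
  | succ n ih => rw [pow_succ]; exact ih.mul hI

lemma finrank_quotient_eq_sum_of_surjective {M ι : Type*} [AddCommGroup M] [Module k M] [Fintype ι]
    {Q : ι → Type*} [∀ i, AddCommGroup (Q i)] [∀ i, Module k (Q i)] [∀ i, Module.Finite k (Q i)]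
    (ψ : ∀ i, M →ₗ[k] Q i) {K : Submodule k M} (hK : ∀ y, y ∈ K ↔ ∀ i, ψ i y = 0)
    (hsurj : ∀ v : ∀ i, Q i, ∃ y, ∀ i, ψ i y = v i) :
    Module.finrank k (M ⧸ K) = ∑ i, Module.finrank k (Q i) := by
  have hker : K = LinearMap.ker (LinearMap.pi ψ) := by
    ext y
    rw [hK, LinearMap.mem_ker, funext_iff]
    rfl
  have hs : Function.Surjective (LinearMap.pi ψ) := fun v =>
    (hsurj v).imp fun y hy => funext hy
  rw [hker, ((LinearMap.pi ψ).quotKerEquivOfSurjective hs).finrank_eq, Module.finrank_pi_fintype]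

/-- For graded subspaces `W ≤ V` which agree in degrees at least `N`, the dimension of `V / W` is
the sum over all degrees of the differences of the dimensions of the graded components. -/
lemma finrank_quotient_eq_sum {V W : Submodule k R}
    (hfin : ∀ m, Module.Finite k (V ⊓ 𝒜 m : Submodule k R))
    (hV : ∀ y ∈ V, ∀ m, (DirectSum.decompose 𝒜 y m : R) ∈ V)
    (hW : ∀ y ∈ W, ∀ m, (DirectSum.decompose 𝒜 y m : R) ∈ W) (hWV : W ≤ V) {N : ℕ}
    (hN : ∀ m ≥ N, V ⊓ 𝒜 m ≤ W ⊓ 𝒜 m) :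
    (Module.finrank k (V ⧸ W.comap V.subtype) : ℝ) =
      ∑ m ∈ Finset.range N, ((Module.finrank k (V ⊓ 𝒜 m : Submodule k R) : ℝ) -
        Module.finrank k (W ⊓ 𝒜 m : Submodule k R)) := by
  let ψ : ∀ m : Fin N, V →ₗ[k]
      (V ⊓ 𝒜 m : Submodule k R) ⧸ (W ⊓ 𝒜 m).comap (V ⊓ 𝒜 m).subtype :=
    fun m => (Submodule.mkQ _).comp
      (((GradedAlgebra.proj 𝒜 m).comp V.subtype).codRestrict
        (V ⊓ 𝒜 m) fun y => ⟨hV y y.2 m, SetLike.coe_mem _⟩)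
  have hψ : ∀ y m, ψ m y = 0 ↔ (DirectSum.decompose 𝒜 (y : R) (m : ℕ) : R) ∈ W := by
    intro y m
    refine (Submodule.Quotient.mk_eq_zero _).trans ⟨fun h => h.1, fun h => ⟨h, SetLike.coe_mem _⟩⟩
  rw [finrank_quotient_eq_sum_of_surjective
    (Q := fun m : Fin N => (V ⊓ 𝒜 m : Submodule k R) ⧸ (W ⊓ 𝒜 m).comap (V ⊓ 𝒜 m).subtype)
    ψ (K := W.comap V.subtype) ?_ ?_,
    Nat.cast_sum, ← Fin.sum_univ_eq_sum_range
    (fun m => (Module.finrank k (V ⊓ 𝒜 m : Submodule k R) : ℝ) -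
        Module.finrank k (W ⊓ 𝒜 m : Submodule k R))]
  · exact Finset.sum_congr rfl fun m _ => finrank_quotient_comap_subtype (inf_le_inf_right _ hWV)
  · refine fun y => ⟨fun h m => (hψ y m).2 (hW y h m), fun h => ?_⟩
    change (y : R) ∈ W
    classical
    rw [← DirectSum.sum_support_decompose 𝒜 (y : R)]
    refine Submodule.sum_mem _ fun m _ => ?_
    by_cases hm : m < N
    · exact (hψ y ⟨m, hm⟩).1 (h ⟨m, hm⟩)
    · exact (hN m (not_lt.1 hm) ⟨hV y y.2 m, SetLike.coe_mem _⟩).1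
  · intro v
    choose w hw using fun m => Submodule.mkQ_surjective _ (v m)
    refine ⟨⟨∑ m : Fin N, (w m : R), Submodule.sum_mem _ fun m _ => (w m).2.1⟩, fun m => ?_⟩
    rw [← hw m]
    refine congrArg (Submodule.mkQ _) (Subtype.ext ?_)
    change (DirectSum.decompose 𝒜 (∑ m : Fin N, (w m : R)) (m : ℕ) : R) = w m
    rw [DirectSum.decompose_sum, DFinsupp.finsetSum_apply, AddSubmonoidClass.coe_finsetSum,
      Finset.sum_eq_single m]
    · exact DirectSum.decompose_of_mem_same 𝒜 (w m).2.2
    · intro j _ hjm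
      exact DirectSum.decompose_of_mem_ne 𝒜 (w j).2.2 fun h => hjm (Fin.ext h)
    · simp

lemma quotDim_eq_sum (hSG : IsStandardGraded k 𝒜) (hI : I.IsHomogeneous 𝒜)
    (hJ : J.IsHomogeneous 𝒜) (hIJ : I ≤ J) {N : ℕ}
    (hN : ∀ m ≥ N, idealComp k 𝒜 J m ≤ idealComp k 𝒜 I m) :
    (quotDim k (Submodule.restrictScalars k J) (Submodule.restrictScalars k I) : ℝ) =
      ∑ m ∈ Finset.range N, ((compLen k 𝒜 J m : ℝ) - compLen k 𝒜 I m) :=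
  finrank_quotient_eq_sum (finite_idealComp hSG J) (fun _ hy m => hJ m hy)
    (fun _ hy m => hI m hy) hIJ hN

end Colength


/-- If `ℓ_R(J/I) < ∞`, then `lim_n d!·ℓ_R(Jⁿ/Iⁿ)/n^d` exists and
equals `∫₀^∞ (f_{{Jⁿ}}(x) − f_{{Iⁿ}}(x)) dx`. -/
theorem statement15
    (k : Type*) [Field k] (R : Type*) [CommRing R] [IsDomain R] [IsNoetherianRing R]
    [Algebra k R] (𝒜 : ℕ → Submodule k R) [GradedAlgebra 𝒜]
    (hSG : IsStandardGraded k 𝒜)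
    (d : ℕ) (hd : 2 ≤ d) (hdim : ringKrullDim R = (d : WithBot ℕ∞))
    (I J : Ideal R) (hIhom : I.IsHomogeneous 𝒜) (hJhom : J.IsHomogeneous 𝒜) (hIJ : I ≤ J)
    (hht0 : 0 < idealHeight I) (hhtIJ : idealHeight I ≤ idealHeight J)
    (hhtJ : idealHeight J < (d : ℕ∞))
    (hfin : IsFiniteLength R (↥J ⧸ Submodule.comap (Submodule.subtype J) I)) :
    Filter.Tendsto (fun n : ℕ =>
        (Nat.factorial d : ℝ) *
          (quotDim k (Submodule.restrictScalars k (J ^ n))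
            (Submodule.restrictScalars k (I ^ n))) / (n : ℝ) ^ d)
      Filter.atTop
      (nhds (∫ x in Set.Ioi (0 : ℝ),
        (adicDensity k 𝒜 J d x - adicDensity k 𝒜 I d x))) := by
  -- the normalizing exponent of the densities is `e = d - 1`
  obtain ⟨e, rfl⟩ : ∃ e, d = e + 1 := ⟨d - 1, by omega⟩
  have hI0 : I ≠ ⊥ := ne_bot_of_idealHeight_pos hht0
  have hJ0 : J ≠ ⊥ := ne_bot_of_idealHeight_pos (hht0.trans_le hhtIJ)
  have hdim0 : 0 < ringKrullDim R := by rw [hdim]; exact_mod_cast Nat.succ_pos e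
  obtain ⟨c, hc⟩ := exists_idealComp_pow_le hSG hIhom hJhom hfin
  obtain ⟨C, hC⟩ := exists_finrank_graded_le hSG hdim
  obtain ⟨D, hD⟩ := exists_compLen_shift hSG hIhom hI0
  obtain ⟨D', hD'⟩ := exists_compLen_shift hSG hJhom hJ0
  have hpow : ∀ n, I ^ n ≤ J ^ n := fun n => Ideal.pow_right_mono hIJ n
  have hbound : ∀ (a : Ideal R) (m : ℕ), (compLen k 𝒜 a m : ℝ) ≤ C * ((m : ℝ) + 1) ^ e :=
    fun a m => (Nat.cast_le.2 (compLen_le hSG a m)).trans (hC m)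
  have hdens : ∀ (a : Ideal R) (x : ℝ), adicDensity k 𝒜 a (e + 1) x =
      density (fun n m => compLen k 𝒜 (a ^ n) m) e ((e + 1).factorial : ℝ) x := by
    intro a x
    simp only [adicDensity, density, ratio, mul_div_assoc, Nat.add_sub_cancel]
  simp only [hdens]
  refine (tendsto_sum_density (c := c) (h := fun n m => compLen k 𝒜 (I ^ n) m)
    (h' := fun n m => compLen k 𝒜 (J ^ n) m) (by positivity)
    (fun n m => compLen_mono hSG hdim0 _ m) hD (fun n m => hbound _ m)
    (exists_poly_compLen hSG hIhom)
    (fun n m => compLen_mono hSG hdim0 _ m) hD' (fun n m => hbound _ m)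
    (exists_poly_compLen hSG hJhom) fun n m _ hm => ?_).congr fun n => ?_
  · have h : idealComp k 𝒜 (I ^ n) m = idealComp k 𝒜 (J ^ n) m :=
      le_antisymm (inf_le_inf_right _ (hpow n)) (hc n m hm)
    change Module.finrank k (idealComp k 𝒜 (I ^ n) m) = Module.finrank k (idealComp k 𝒜 (J ^ n) m)
    exact congrArg (fun W : Submodule k R => Module.finrank k W) h
  · rw [quotDim_eq_sum hSG (isHomogeneous_pow hIhom n) (isHomogeneous_pow hJhom n) (hpow n)
      (N := c * n) fun m hm => hc n m hm]
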